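/- Let ℋ = ⊗_{x=1}^m 𝒬_x be a tensor product of m finite-dimensional complex Hilbert spaces (qudits), and let H = ∑_{1≤i₁<⋯<i_k≤m} H_{i₁⋯i_k} be a k-local Hamiltonian, where each term H_{i₁⋯i_k} acts as the identity on all qudits outside {i₁,…,i_k} and has vanishing partial trace over each of the qudits i₁,…,i_k. Then for every nonzero operator O on ℋ with operator norm ‖O‖_∞ ≤ 1 and every real p ≥ 2, ‖HO‖_p̄ ≤ e · p^{k/2} · ‖H‖_(2) · ‖O‖_p̄ · (|ln ‖O‖_p̄| + 1)^{k/2}, where ‖H‖_(2) := √(∑_{1≤i₁<⋯<i_k≤m} ‖H_{i₁⋯i_k}‖_∞²). -/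

import Mathlib

open scoped Kronecker Matrix

/-- The operator norm (largest singular value) of a complex matrix. -/
noncomputable def opNorm {n : Type*} [Fintype n] [DecidableEq n] (A : Matrix n n ℂ) : ℝ :=
  ‖Matrix.toEuclideanCLM (𝕜 := ℂ) A‖

/-- The Schatten `p`-norm `‖A‖_p = (Tr((AᴴA)^{p/2}))^{1/p}`, expressed through the
eigenvalues of `AᴴA` (the squared singular values of `A`). -/
noncomputable def schattenNorm {n : Type*} [Fintype n] [DecidableEq n] (p : ℝ)
    (A : Matrix n n ℂ) : ℝ :=
  (∑ i, ((Matrix.isHermitian_conjTranspose_mul_self A).eigenvalues i) ^ (p / 2)) ^ (1 / p)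

/-- The normalized Schatten `p`-norm `‖A‖_p̄ := ‖A‖_p / ‖I‖_p`. -/
noncomputable def nschattenNorm {n : Type*} [Fintype n] [DecidableEq n] (p : ℝ)
    (A : Matrix n n ℂ) : ℝ :=
  schattenNorm p A / schattenNorm p (1 : Matrix n n ℂ)

/-- An operator on the qudits `Q x`, `x : Fin m`, is supported on the set `S` if (after
reindexing along the tensor factorization of the configuration space) it has the form
`B ⊗ 1`, i.e. it acts as the identity on all qudits outside `S`. -/
def SupportedOn {m : ℕ} (Q : Fin m → Type*) [∀ x, Fintype (Q x)] [∀ x, DecidableEq (Q x)]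
    (S : Finset (Fin m)) (A : Matrix (∀ x, Q x) (∀ x, Q x) ℂ) : Prop :=
  ∃ B : Matrix (∀ x : {y : Fin m // y ∈ S}, Q x) (∀ x : {y : Fin m // y ∈ S}, Q x) ℂ,
    A = Matrix.reindex (Equiv.piEquivPiSubtypeProd (· ∈ S) Q).symm
          (Equiv.piEquivPiSubtypeProd (· ∈ S) Q).symm
          (B ⊗ₖ (1 : Matrix (∀ x : {y : Fin m // ¬ y ∈ S}, Q x)
                            (∀ x : {y : Fin m // ¬ y ∈ S}, Q x) ℂ))

/-- The partial trace of `A` over the qudit at site `x` vanishes. -/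
def TracelessAt {m : ℕ} (Q : Fin m → Type*) [∀ x, Fintype (Q x)] [∀ x, DecidableEq (Q x)]
    (x : Fin m) (A : Matrix (∀ y, Q y) (∀ y, Q y) ℂ) : Prop :=
  ∀ f g : ∀ y, Q y,
    ∑ v : Q x, A (Function.update f x v) (Function.update g x v) = 0

/-!
For an even exponent `2N` the Schatten norm is a trace, `‖X‖_{2N}^{2N} = Tr (XᴴX)^N`. Expanding
words in `X` and `Y` and applying Hölder's inequality to each yields the two-point inequality
`‖X + Y‖² + ‖X - Y‖² ≤ 2 (‖X‖² + (2N - 1) ‖Y‖²)`. When `Y` is traceless at a qudit on which `X` is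
trivial, `Y` is orthogonal to the gradient of the norm at `X`, so that `t ↦ ‖X + tY‖` is minimal
at `0`, and the inequality improves to the martingale form `‖X + Y‖² ≤ ‖X‖² + (2N - 1) ‖Y‖²`.
Peeling off the qudits one at a time gives `‖H‖_{2N}² ≤ (2N - 1)^k ∑ ‖H_S‖_{2N}²`, and log-convexity
of the norm in the inverse exponent turns this into `‖H‖_r̄ ≤ r^{k/2} ‖H‖_(2)` for all real `r ≥ 2`.

By Hölder, `‖HO‖_p̄ ≤ ‖H‖_r̄ ‖O‖_s̄` with `1/p = 1/r + 1/s`, and `‖O‖_∞ ≤ 1` bounds `‖O‖_s̄` by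
`‖O‖_p̄^{1 - p/r}`. The choice `r = p (|ln ‖O‖_p̄| + 1)` makes the loss `‖O‖_p̄^{-p/r}` at most `e`.
-/

section Schatten

open Matrix
open scoped Matrix.Norms.L2Operator

variable {n : Type*} [Fintype n] [DecidableEq n]

/-! ### Singular values -/

lemma exists_orthonormalBasis_eq_norm_smul {𝕜 E : Type*} [RCLike 𝕜] [NormedAddCommGroup E]
    [InnerProductSpace 𝕜 E] [FiniteDimensional 𝕜 E] {ι : Type*} [Fintype ι]
    (hcard : Module.finrank 𝕜 E = Fintype.card ι) {v : ι → E}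
    (hv : Pairwise fun i j => inner 𝕜 (v i) (v j) = 0) :
    ∃ c : OrthonormalBasis ι 𝕜 E, ∀ i, v i = (‖v i‖ : 𝕜) • c i := by
  have hon : Orthonormal 𝕜 (Set.domRestrict {i | v i ≠ 0} fun i => (‖v i‖⁻¹ : 𝕜) • v i) := by
    refine ⟨fun i => ?_, fun i j hij => ?_⟩
    · exact norm_smul_inv_norm i.2
    · simp [inner_smul_left, inner_smul_right, hv (Subtype.coe_ne_coe.mpr hij)]
  obtain ⟨c, hc⟩ := hon.exists_orthonormalBasis_extension_of_card_eq hcard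
  refine ⟨c, fun i => ?_⟩
  rcases eq_or_ne (v i) 0 with hi | hi
  · simp [hi]
  · rw [hc i hi, smul_smul, mul_inv_cancel₀ (by simpa using hi), one_smul]

lemma pairwise_inner_toEuclideanCLM_eigenvectorBasis_eq_zero {𝕜 : Type*} [RCLike 𝕜]
    (A : Matrix n n 𝕜) :
    Pairwise fun i j =>
      inner 𝕜
        (toEuclideanCLM (𝕜 := 𝕜) A ((isHermitian_conjTranspose_mul_self A).eigenvectorBasis i))
        (toEuclideanCLM (𝕜 := 𝕜) A ((isHermitian_conjTranspose_mul_self A).eigenvectorBasis j)) =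
      0 := by
  intro i j hij
  set hA := isHermitian_conjTranspose_mul_self A
  have heig : toEuclideanCLM (𝕜 := 𝕜) (Aᴴ * A) (hA.eigenvectorBasis j) =
      (hA.eigenvalues j : 𝕜) • hA.eigenvectorBasis j := by
    ext k
    rw [ofLp_toEuclideanCLM, hA.mulVec_eigenvectorBasis, PiLp.smul_apply, Pi.smul_apply,
      RCLike.real_smul_eq_coe_smul (K := 𝕜)]
  rw [← ContinuousLinearMap.adjoint_inner_right, ← ContinuousLinearMap.star_eq_adjoint, ← map_star,
    ← mul_apply_eq_comp, ← map_mul, star_eq_conjTranspose, heig, inner_smul_right,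
    hA.eigenvectorBasis.orthonormal.2 hij, mul_zero]

lemma exists_svd {𝕜 : Type*} [RCLike 𝕜] (A : Matrix n n 𝕜) :
    ∃ U ∈ unitaryGroup n 𝕜, ∃ s : n → ℝ, 0 ≤ s ∧ ∃ V ∈ unitaryGroup n 𝕜,
      A = U * diagonal (fun i => (s i : 𝕜)) * V := by
  set hA := isHermitian_conjTranspose_mul_self A
  set W := hA.eigenvectorUnitary
  obtain ⟨c, hc⟩ := exists_orthonormalBasis_eq_norm_smul (by simp)
    (pairwise_inner_toEuclideanCLM_eigenvectorBasis_eq_zero A)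
  set s : n → ℝ := fun i => ‖toEuclideanCLM (𝕜 := 𝕜) A (hA.eigenvectorBasis i)‖
  set U := (EuclideanSpace.basisFun n 𝕜).toBasis.toMatrix c.toBasis with hU
  refine ⟨U, (EuclideanSpace.basisFun n 𝕜).toMatrix_orthonormalBasis_mem_unitary c, s,
    fun i => norm_nonneg _, star (W : Matrix n n 𝕜), (star W).2, ?_⟩
  have hAW : A * (W : Matrix n n 𝕜) = U * diagonal (fun i => (s i : 𝕜)) := by
    ext k i
    calc (A * (W : Matrix n n 𝕜)) k i = (A *ᵥ hA.eigenvectorBasis i) k := rfl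
      _ = s i * c i k := congrArg (fun x => x k) (hc i)
      _ = _ := by simp [hU, Module.Basis.toMatrix_apply, mul_comm]
  rw [← hAW, mul_assoc, Unitary.mul_star_self_of_mem W.2, mul_one]

open scoped ComplexOrder in
lemma schattenNorm_nonneg (p : ℝ) (A : Matrix n n ℂ) : 0 ≤ schattenNorm p A :=
  Real.rpow_nonneg (Finset.sum_nonneg fun i _ =>
    Real.rpow_nonneg ((posSemidef_conjTranspose_mul_self A).eigenvalues_nonneg i) _) _

lemma schattenNorm_congr {A B : Matrix n n ℂ} (p : ℝ)
    (h : (Aᴴ * A).charpoly = (Bᴴ * B).charpoly) : schattenNorm p A = schattenNorm p B := by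
  have heig := ((isHermitian_conjTranspose_mul_self A).eigenvalues_eq_eigenvalues_iff
    (isHermitian_conjTranspose_mul_self B)).mpr h
  rw [schattenNorm, schattenNorm, heig]

lemma schattenNorm_conjTranspose (p : ℝ) (A : Matrix n n ℂ) :
    schattenNorm p Aᴴ = schattenNorm p A :=
  schattenNorm_congr p (by rw [conjTranspose_conjTranspose, charpoly_mul_comm])

lemma schattenNorm_mul_of_mem_unitaryGroup (p : ℝ) (A : Matrix n n ℂ) {V : Matrix n n ℂ}
    (hV : V ∈ unitaryGroup n ℂ) : schattenNorm p (A * V) = schattenNorm p A :=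
  schattenNorm_congr p (by
    rw [conjTranspose_mul, mul_assoc, charpoly_mul_comm, ← mul_assoc Aᴴ, mul_assoc,
      ← star_eq_conjTranspose V, mem_unitaryGroup_iff.mp hV, mul_one])

lemma schattenNorm_mul_of_mem_unitaryGroup_left (p : ℝ) (A : Matrix n n ℂ) {U : Matrix n n ℂ}
    (hU : U ∈ unitaryGroup n ℂ) : schattenNorm p (U * A) = schattenNorm p A := by
  rw [← schattenNorm_conjTranspose, conjTranspose_mul, ← star_eq_conjTranspose U,
    schattenNorm_mul_of_mem_unitaryGroup p _ (Unitary.star_mem hU), schattenNorm_conjTranspose]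

lemma schattenNorm_diagonal (p : ℝ) (a : n → ℂ) :
    schattenNorm p (diagonal a) = (∑ i, ‖a i‖ ^ p) ^ (1 / p) := by
  set hA := isHermitian_conjTranspose_mul_self (diagonal a)
  have hroots : Finset.univ.val.map hA.eigenvalues = Finset.univ.val.map fun i => ‖a i‖ ^ 2 := by
    refine Multiset.map_injective Complex.ofReal_injective ?_
    have hchar : ((diagonal a)ᴴ * diagonal a).charpoly.roots =
        Finset.univ.val.map fun i => star (a i) * a i := by
      rw [diagonal_conjTranspose, diagonal_mul_diagonal, charpoly_diagonal,
        Polynomial.roots_prod _ _ (Finset.prod_ne_zero_iff.mpr fun i _ =>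
          Polynomial.X_sub_C_ne_zero _)]
      simp only [Polynomial.roots_X_sub_C, Multiset.bind_singleton, Pi.star_apply]
    rw [Multiset.map_map, Multiset.map_map]
    refine hA.roots_charpoly_eq_eigenvalues.symm.trans (hchar.trans ?_)
    refine Multiset.map_congr rfl fun i _ => ?_
    simpa using Complex.conj_mul' (a i)
  have hsum : ∑ i, hA.eigenvalues i ^ (p / 2) = ∑ i, (‖a i‖ ^ 2) ^ (p / 2) := by
    have hmap := congrArg (fun m => (m.map fun x : ℝ => x ^ (p / 2)).sum) hroots
    simp only [Multiset.map_map] at hmap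
    exact hmap
  refine congrArg (· ^ (1 / p)) (hsum.trans (Finset.sum_congr rfl fun i _ => ?_))
  rw [← Real.rpow_natCast_mul (norm_nonneg _), Nat.cast_ofNat, mul_div_cancel₀ p two_ne_zero]

lemma schattenNorm_unitary_mul_diagonal_mul_unitary (p : ℝ) {U V : Matrix n n ℂ}
    (hU : U ∈ unitaryGroup n ℂ) (a : n → ℂ) (hV : V ∈ unitaryGroup n ℂ) :
    schattenNorm p (U * diagonal a * V) = (∑ i, ‖a i‖ ^ p) ^ (1 / p) := by
  rw [schattenNorm_mul_of_mem_unitaryGroup p _ hV, schattenNorm_mul_of_mem_unitaryGroup_left p _ hU,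
    schattenNorm_diagonal]

lemma schattenNorm_smul {p : ℝ} (hp : p ≠ 0) (c : ℂ) (A : Matrix n n ℂ) :
    schattenNorm p (c • A) = ‖c‖ * schattenNorm p A := by
  obtain ⟨U, hU, s, -, V, hV, rfl⟩ := exists_svd A
  rw [← smul_mul_assoc, ← mul_smul_comm, ← diagonal_smul,
    schattenNorm_unitary_mul_diagonal_mul_unitary p hU _ hV,
    schattenNorm_unitary_mul_diagonal_mul_unitary p hU _ hV]
  simp only [Pi.smul_apply, norm_smul, Real.mul_rpow (norm_nonneg _) (norm_nonneg _),
    ← Finset.mul_sum]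
  rw [Real.mul_rpow (by positivity) (by positivity), one_div, Real.rpow_rpow_inv (norm_nonneg _) hp]

lemma schattenNorm_one (p : ℝ) :
    schattenNorm p (1 : Matrix n n ℂ) = (Fintype.card n : ℝ) ^ (1 / p) := by
  simp [← diagonal_one, schattenNorm_diagonal]

lemma exists_svd_schattenNorm (A : Matrix n n ℂ) :
    ∃ U ∈ unitaryGroup n ℂ, ∃ s : n → ℝ, 0 ≤ s ∧ ∃ V ∈ unitaryGroup n ℂ,
      A = U * diagonal (fun i => (s i : ℂ)) * V ∧
      (∀ p, schattenNorm p A = (∑ i, s i ^ p) ^ (1 / p)) ∧ ‖s‖ = ‖A‖ := by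
  obtain ⟨U, hU, s, hs, V, hV, rfl⟩ := exists_svd A
  refine ⟨U, hU, s, hs, V, hV, rfl, fun p => ?_, ?_⟩
  · rw [schattenNorm_unitary_mul_diagonal_mul_unitary p hU _ hV]
    simp only [RCLike.norm_ofReal, abs_of_nonneg (hs _)]
  · rw [CStarRing.norm_mul_mem_unitary _ hV, CStarRing.norm_mem_unitary_mul _ hU,
      l2_opNorm_diagonal, Pi.norm_def, Pi.norm_def]
    exact congrArg _ (Finset.sup_congr rfl fun i _ => (Complex.nnnorm_real (s i)).symm)

/-! ### Hölder's inequality -/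

lemma sum_norm_sq_col_le (K : Matrix n n ℂ) (j : n) : ∑ i, ‖K i j‖ ^ 2 ≤ ‖K‖ ^ 2 := by
  have hcol := l2_opNorm_mulVec K (EuclideanSpace.single j 1)
  rw [PiLp.norm_single, norm_one, mul_one] at hcol
  refine (le_of_eq ?_).trans (pow_le_pow_left₀ (norm_nonneg _) hcol 2)
  simp [EuclideanSpace.norm_sq_eq]

lemma sum_norm_sq_row_le (K : Matrix n n ℂ) (i : n) : ∑ j, ‖K i j‖ ^ 2 ≤ ‖K‖ ^ 2 := by
  simpa [l2_opNorm_conjTranspose] using sum_norm_sq_col_le Kᴴ i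

lemma sum_norm_mul_norm_le_one {K L : Matrix n n ℂ} (hK : ‖K‖ ≤ 1) (hL : ‖L‖ ≤ 1) (i : n) :
    ∑ j, ‖K i j‖ * ‖L j i‖ ≤ 1 :=
  calc ∑ j, ‖K i j‖ * ‖L j i‖ ≤ ∑ j, (‖K i j‖ ^ 2 + ‖L j i‖ ^ 2) / 2 :=
        Finset.sum_le_sum fun j _ => by linarith [two_mul_le_add_sq ‖K i j‖ ‖L j i‖]
    _ = (∑ j, ‖K i j‖ ^ 2 + ∑ j, ‖L j i‖ ^ 2) / 2 := by
        rw [← Finset.sum_div, Finset.sum_add_distrib]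
    _ ≤ (1 + 1) / 2 := by
        gcongr
        · exact (sum_norm_sq_row_le K i).trans (pow_le_one₀ (norm_nonneg _) hK)
        · exact (sum_norm_sq_col_le L i).trans (pow_le_one₀ (norm_nonneg _) hL)
    _ = 1 := by norm_num

lemma norm_trace_le (A : Matrix n n ℂ) : ‖trace A‖ ≤ Fintype.card n * ‖A‖ := by
  have hentry (i : n) : ‖A i i‖ ≤ ‖A‖ := by
    refine le_of_sq_le_sq ((Finset.single_le_sum (f := fun j => ‖A i j‖ ^ 2) ?_
      (Finset.mem_univ i)).trans (sum_norm_sq_row_le A i)) (norm_nonneg _)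
    exact fun _ _ => by positivity
  calc ‖trace A‖ ≤ ∑ i, ‖A i i‖ := norm_sum_le _ _
    _ ≤ ∑ _i : n, ‖A‖ := Finset.sum_le_sum fun i _ => hentry i
    _ = Fintype.card n * ‖A‖ := by simp

lemma sum_sum_mul_mul_le_of_substochastic {ι κ : Type*} [Fintype ι] [Fintype κ] {w : ι → κ → ℝ}
    (hw : ∀ i j, 0 ≤ w i j) (hrow : ∀ i, ∑ j, w i j ≤ 1) (hcol : ∀ j, ∑ i, w i j ≤ 1)
    {p q : ℝ} (hpq : p.HolderConjugate q) {a : ι → ℝ} {b : κ → ℝ} (ha : 0 ≤ a) (hb : 0 ≤ b) :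
    ∑ i, ∑ j, a i * w i j * b j ≤ (∑ i, a i ^ p) ^ (1 / p) * (∑ j, b j ^ q) ^ (1 / q) := by
  have hsplit (i : ι) (j : κ) :
      a i * w i j * b j = (a i * w i j ^ (1 / p)) * (b j * w i j ^ (1 / q)) := by
    have hwij : w i j ^ (1 / p) * w i j ^ (1 / q) = w i j := by
      rw [← Real.rpow_add_of_nonneg (hw i j) (one_div_nonneg.mpr hpq.nonneg)
        (one_div_nonneg.mpr hpq.symm.nonneg), hpq.one_div_add_one_div, one_div_one, Real.rpow_one]
    linear_combination -(a i * b j) * hwij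
  have hpow {x y r : ℝ} (hx : 0 ≤ x) (hy : 0 ≤ y) (hr : r ≠ 0) :
      (x * y ^ (1 / r)) ^ r = x ^ r * y := by
    rw [Real.mul_rpow hx (by positivity), one_div, Real.rpow_inv_rpow hy hr]
  have hleft : ∑ x : ι × κ, (a x.1 * w x.1 x.2 ^ (1 / p)) ^ p ≤ ∑ i, a i ^ p := by
    simp only [hpow (ha _) (hw _ _) hpq.ne_zero, Fintype.sum_prod_type, ← Finset.mul_sum]
    exact Finset.sum_le_sum fun i _ => mul_le_of_le_one_right (Real.rpow_nonneg (ha i) _) (hrow i)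
  have hright : ∑ x : ι × κ, (b x.2 * w x.1 x.2 ^ (1 / q)) ^ q ≤ ∑ j, b j ^ q := by
    simp only [hpow (hb _) (hw _ _) hpq.symm.ne_zero, Fintype.sum_prod_type_right, ← Finset.mul_sum]
    exact Finset.sum_le_sum fun j _ => mul_le_of_le_one_right (Real.rpow_nonneg (hb j) _) (hcol j)
  have hw' (r : ℝ) (i : ι) (j : κ) := Real.rpow_nonneg (hw i j) (1 / r)
  have hA (x : ι × κ) := mul_nonneg (ha x.1) (hw' p x.1 x.2)
  have hB (x : ι × κ) := mul_nonneg (hb x.2) (hw' q x.1 x.2)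
  simp only [hsplit, ← Fintype.sum_prod_type']
  refine (Real.inner_le_Lp_mul_Lq_of_nonneg Finset.univ hpq (fun x _ => hA x)
    (fun x _ => hB x)).trans ?_
  exact mul_le_mul
    (Real.rpow_le_rpow (Finset.sum_nonneg fun x _ => Real.rpow_nonneg (hA x) _) hleft
      (one_div_nonneg.mpr hpq.nonneg))
    (Real.rpow_le_rpow (Finset.sum_nonneg fun x _ => Real.rpow_nonneg (hB x) _) hright
      (one_div_nonneg.mpr hpq.symm.nonneg))
    (Real.rpow_nonneg (Finset.sum_nonneg fun x _ => Real.rpow_nonneg (hB x) _) _)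
    (Real.rpow_nonneg (Finset.sum_nonneg fun i _ => Real.rpow_nonneg (ha i) _) _)

lemma norm_trace_diagonal_mul_mul_diagonal_mul_le {p q : ℝ} (hpq : p.HolderConjugate q)
    {K L : Matrix n n ℂ} (hK : ‖K‖ ≤ 1) (hL : ‖L‖ ≤ 1) (a b : n → ℂ) :
    ‖trace (diagonal a * K * diagonal b * L)‖ ≤
      schattenNorm p (diagonal a) * schattenNorm q (diagonal b) := by
  have htrace : trace (diagonal a * K * diagonal b * L) =
      ∑ i, ∑ j, a i * K i j * b j * L j i := by
    simp only [trace, diag_apply, mul_apply (M := diagonal a * K * diagonal b), mul_diagonal,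
      diagonal_mul]
  rw [schattenNorm_diagonal, schattenNorm_diagonal, htrace]
  calc ‖∑ i, ∑ j, a i * K i j * b j * L j i‖
      ≤ ∑ i, ∑ j, ‖a i * K i j * b j * L j i‖ :=
        (norm_sum_le _ _).trans (Finset.sum_le_sum fun i _ => norm_sum_le _ _)
    _ = ∑ i, ∑ j, ‖a i‖ * (‖K i j‖ * ‖L j i‖) * ‖b j‖ := by
        simp only [norm_mul]
        exact Finset.sum_congr rfl fun i _ => Finset.sum_congr rfl fun j _ => by ring
    _ ≤ _ := sum_sum_mul_mul_le_of_substochastic (fun i j => by positivity)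
        (sum_norm_mul_norm_le_one hK hL)
        (fun j => by simpa only [mul_comm] using sum_norm_mul_norm_le_one hL hK j)
        hpq (fun i => norm_nonneg _) (fun j => norm_nonneg _)

lemma norm_le_one_of_mem_unitaryGroup {U : Matrix n n ℂ} (hU : U ∈ unitaryGroup n ℂ) : ‖U‖ ≤ 1 := by
  cases subsingleton_or_nontrivial (Matrix n n ℂ)
  · simp [Subsingleton.elim U 0]
  · exact (CStarRing.norm_of_mem_unitary hU).le

lemma norm_mul_le_one {R : Type*} [NonUnitalSeminormedRing R] {a b : R} (ha : ‖a‖ ≤ 1)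
    (hb : ‖b‖ ≤ 1) : ‖a * b‖ ≤ 1 :=
  (norm_mul_le a b).trans (mul_le_one₀ ha (norm_nonneg b) hb)

lemma norm_trace_mul_mul_mul_le {p q : ℝ} (hpq : p.HolderConjugate q) (A B : Matrix n n ℂ)
    {K L : Matrix n n ℂ} (hK : ‖K‖ ≤ 1) (hL : ‖L‖ ≤ 1) :
    ‖trace (A * K * B * L)‖ ≤ schattenNorm p A * schattenNorm q B := by
  obtain ⟨U, hU, s, -, V, hV, rfl, -⟩ := exists_svd_schattenNorm A
  obtain ⟨X, hX, t, -, Y, hY, rfl, -⟩ := exists_svd_schattenNorm B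
  simp only [schattenNorm_mul_of_mem_unitaryGroup _ _ hV,
    schattenNorm_mul_of_mem_unitaryGroup _ _ hY,
    schattenNorm_mul_of_mem_unitaryGroup_left _ _ hU,
    schattenNorm_mul_of_mem_unitaryGroup_left _ _ hX]
  have hcycle := trace_mul_comm U
    (diagonal (fun i => (s i : ℂ)) * (V * K * X) * diagonal (fun i => (t i : ℂ)) * (Y * L))
  simp only [mul_assoc] at hcycle ⊢
  rw [hcycle]
  have hVKX := norm_mul_le_one (norm_mul_le_one (norm_le_one_of_mem_unitaryGroup hV) hK)
    (norm_le_one_of_mem_unitaryGroup hX)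
  have hYLU := norm_mul_le_one (norm_mul_le_one (norm_le_one_of_mem_unitaryGroup hY) hL)
    (norm_le_one_of_mem_unitaryGroup hU)
  simpa only [mul_assoc] using norm_trace_diagonal_mul_mul_diagonal_mul_le hpq hVKX hYLU
    (fun i => (s i : ℂ)) (fun i => (t i : ℂ))

lemma norm_trace_mul_le {p q : ℝ} (hpq : p.HolderConjugate q) (A B : Matrix n n ℂ) :
    ‖trace (A * B)‖ ≤ schattenNorm p A * schattenNorm q B := by
  have hone : ‖(1 : Matrix n n ℂ)‖ ≤ 1 := norm_le_one_of_mem_unitaryGroup (one_mem _)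
  simpa using norm_trace_mul_mul_mul_le hpq A B hone hone

lemma schattenNorm_le_of_forall_norm_trace_mul_le {p q : ℝ} (hpq : p.HolderConjugate q)
    {A : Matrix n n ℂ} {c : ℝ} (hc : 0 ≤ c)
    (h : ∀ C, ‖trace (C * A)‖ ≤ schattenNorm q C * c) : schattenNorm p A ≤ c := by
  obtain ⟨U, hU, s, hs, V, hV, hA, hnorm, -⟩ := exists_svd_schattenNorm A
  set S := ∑ i, s i ^ p
  have hS : 0 ≤ S := Finset.sum_nonneg fun i _ => Real.rpow_nonneg (hs i) _
  set C := Vᴴ * diagonal (fun i => ((s i ^ (p - 1) : ℝ) : ℂ)) * Uᴴ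
  have hCnorm : schattenNorm q C = S ^ (1 / q) := by
    refine (schattenNorm_unitary_mul_diagonal_mul_unitary q (Unitary.star_mem hV) _
      (Unitary.star_mem hU)).trans ?_
    refine congrArg (· ^ (1 / q)) (Finset.sum_congr rfl fun i _ => ?_)
    rw [Complex.norm_real, Real.norm_of_nonneg (Real.rpow_nonneg (hs i) _),
      ← Real.rpow_mul (hs i), hpq.sub_one_mul_conj]
  have htrace : trace (C * A) = (S : ℂ) := by
    have hpow (i : n) : s i ^ (p - 1) * s i = s i ^ p := by
      rw [← Real.rpow_add_one' (hs i) (by linarith [hpq.pos]), sub_add_cancel]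
    rw [hA, trace_mul_comm]
    simp only [C, mul_assoc]
    rw [← mul_assoc V, ← star_eq_conjTranspose V, mem_unitaryGroup_iff.mp hV, one_mul,
      trace_mul_comm]
    simp only [mul_assoc]
    rw [← star_eq_conjTranspose U, mem_unitaryGroup_iff'.mp hU, mul_one, diagonal_mul_diagonal,
      trace_diagonal]
    simp [S, ← hpow, mul_comm]
  have hdual : S ≤ S ^ (1 / q) * c := by
    simpa [htrace, hCnorm, abs_of_nonneg hS] using h C
  rw [hnorm p]
  change S ^ (1 / p) ≤ c
  rcases hS.eq_or_lt with h0 | hpos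
  · rwa [← h0, Real.zero_rpow (one_div_ne_zero hpq.ne_zero)]
  · have hSsplit : S ^ (1 / q) * S ^ (1 / p) = S := by
      rw [← Real.rpow_add hpos, add_comm, hpq.one_div_add_one_div, one_div_one, Real.rpow_one]
    exact le_of_mul_le_mul_left (hSsplit.trans_le hdual) (Real.rpow_pos_of_pos hpos _)

/-- The complex power `a ^ z` of a nonnegative real `a`, with `0 ^ z = 0` for every `z`; unlike
`Complex.cpow` at base `0`, this is an entire function of `z` for every `a`. -/
noncomputable def entirePow (a : ℝ) (z : ℂ) : ℂ := if a = 0 then 0 else (a : ℂ) ^ z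

lemma differentiable_entirePow (a : ℝ) : Differentiable ℂ (entirePow a) := by
  rcases eq_or_ne a 0 with rfl | ha
  · have h : entirePow 0 = fun _ => 0 := funext fun z => if_pos rfl
    exact h ▸ differentiable_const 0
  · have h : entirePow a = fun z => (a : ℂ) ^ z := funext fun z => if_neg ha
    exact h ▸ differentiable_id.const_cpow (Or.inl (Complex.ofReal_ne_zero.mpr ha))

lemma norm_entirePow_le {a : ℝ} (ha : 0 ≤ a) (z : ℂ) : ‖entirePow a z‖ ≤ a ^ z.re := by
  rcases ha.eq_or_lt with rfl | ha
  · simpa [entirePow] using Real.rpow_nonneg le_rfl z.re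
  · rw [entirePow, if_neg ha.ne', Complex.norm_cpow_eq_rpow_re_of_pos ha]

lemma entirePow_ofReal {a θ : ℝ} (ha : 0 ≤ a) (hθ : θ ≠ 0) : entirePow a θ = (a ^ θ : ℝ) := by
  rcases ha.eq_or_lt with rfl | ha
  · simp [entirePow, Real.zero_rpow hθ]
  · rw [entirePow, if_neg ha.ne', Complex.ofReal_cpow ha.le]

lemma norm_diagonal_entirePow_le {a : n → ℝ} (ha : 0 ≤ a) {z : ℂ} {M : ℝ} (hM : 0 ≤ M)
    (h : ∀ i, a i ^ z.re ≤ M) : ‖diagonal fun i => entirePow (a i) z‖ ≤ M := by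
  rw [l2_opNorm_diagonal, pi_norm_le_iff_of_nonneg hM]
  exact fun i => (norm_entirePow_le (ha i) z).trans (h i)

lemma schattenNorm_diagonal_entirePow_le {a : n → ℝ} (ha : 0 ≤ a) {z : ℂ} (hz : z.re = 1) {p : ℝ}
    (hp : 0 ≤ p) :
    schattenNorm p (diagonal fun i => entirePow (a i) z) ≤ (∑ i, a i ^ p) ^ (1 / p) := by
  rw [schattenNorm_diagonal]
  gcongr with i
  simpa [hz] using norm_entirePow_le (ha i) z

lemma rpow_le_max_one_norm {ι : Type*} [Fintype ι] {a : ι → ℝ} (ha : 0 ≤ a) {x : ℝ}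
    (hx : x ∈ Set.Icc 0 1) (i : ι) : a i ^ x ≤ max 1 ‖a‖ := by
  have hai : a i ≤ ‖a‖ := (le_abs_self _).trans (norm_le_pi_norm a i)
  rcases le_total (a i) 1 with h | h
  · exact (Real.rpow_le_one (ha i) h hx.1).trans (le_max_left _ _)
  · exact ((Real.rpow_le_self_of_one_le h hx.2).trans hai).trans (le_max_right _ _)

lemma differentiable_trace_mul_diagonal_mul_mul_diagonal_mul (K L M : Matrix n n ℂ)
    {f g : n → ℂ → ℂ}
    (hf : ∀ i, Differentiable ℂ (f i)) (hg : ∀ i, Differentiable ℂ (g i)) :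
    Differentiable ℂ fun z =>
      trace (K * diagonal (fun i => f i z) * L * diagonal (fun i => g i z) * M) := by
  simp only [trace, diag_apply, Matrix.mul_apply (N := M), Matrix.mul_apply (N := L), mul_diagonal]
  fun_prop

/-- The holomorphic family in the parameter `z` interpolating between the endpoints of the Schatten
Hölder inequality. -/
noncomputable def interpolationTrace (C K L M : Matrix n n ℂ) (a b : n → ℝ) (z : ℂ) : ℂ :=
  trace (C * K * diagonal (fun i => entirePow (a i) z) * L *
    diagonal (fun i => entirePow (b i) (1 - z)) * M)

lemma differentiable_interpolationTrace (C K L M : Matrix n n ℂ) (a b : n → ℝ) :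
    Differentiable ℂ (interpolationTrace C K L M a b) :=
  differentiable_trace_mul_diagonal_mul_mul_diagonal_mul _ L M
    (fun i => differentiable_entirePow (a i))
    (fun i => (differentiable_entirePow (b i)).comp (by fun_prop))

lemma bddAbove_norm_interpolationTrace (C K L M : Matrix n n ℂ) {a b : n → ℝ} (ha : 0 ≤ a)
    (hb : 0 ≤ b) :
    BddAbove ((norm ∘ interpolationTrace C K L M a b) ''
      Complex.HadamardThreeLines.verticalClosedStrip 0 1) := by
  refine ⟨Fintype.card n *
    (‖C‖ * ‖K‖ * max 1 ‖a‖ * ‖L‖ * max 1 ‖b‖ * ‖M‖), ?_⟩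
  rintro - ⟨z, hz, rfl⟩
  have hz : z.re ∈ Set.Icc (0 : ℝ) 1 := hz
  have hz' : (1 - z).re ∈ Set.Icc (0 : ℝ) 1 := by
    simpa [Set.mem_Icc, and_comm] using hz
  have hDa := norm_diagonal_entirePow_le ha (z := z) (by positivity) (rpow_le_max_one_norm ha hz)
  have hDb := norm_diagonal_entirePow_le hb (by positivity) (rpow_le_max_one_norm hb hz')
  refine (norm_trace_le _).trans (mul_le_mul_of_nonneg_left ?_ (Nat.cast_nonneg _))
  refine norm_mul_le_of_le (norm_mul_le_of_le (norm_mul_le_of_le (norm_mul_le_of_le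
    (norm_mul_le _ _) hDa) le_rfl) hDb) le_rfl

lemma norm_interpolationTrace_le {p q : ℝ} (hpq : p.HolderConjugate q) (C : Matrix n n ℂ)
    {K L M : Matrix n n ℂ} (hK : ‖K‖ ≤ 1) (hL : ‖L‖ ≤ 1) (hM : ‖M‖ ≤ 1) {a b : n → ℝ} (ha : 0 ≤ a)
    (hb : 0 ≤ b) {θ : ℝ} (hθ : θ ∈ Set.Icc 0 1) :
    ‖interpolationTrace C K L M a b θ‖ ≤
      (schattenNorm q C * (∑ i, b i ^ p) ^ (1 / p)) ^ (1 - θ) *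
        (schattenNorm q C * (∑ i, a i ^ p) ^ (1 / p)) ^ θ := by
  refine Complex.HadamardThreeLines.norm_le_interp_of_mem_verticalClosedStrip₀₁'
    (interpolationTrace C K L M a b) (z := (θ : ℂ)) hθ
    (differentiable_interpolationTrace C K L M a b).diffContOnCl
    (bddAbove_norm_interpolationTrace C K L M ha hb) (fun z hz => ?_) (fun z hz => ?_)
  · have hz : z.re = 0 := hz
    have hD := norm_diagonal_entirePow_le ha (z := z) zero_le_one (by simp [hz])
    have htrace := norm_trace_mul_mul_mul_le hpq.symm C (diagonal fun i => entirePow (b i) (1 - z))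
      (norm_mul_le_one (norm_mul_le_one hK hD) hL) hM
    simp only [← mul_assoc] at htrace
    exact htrace.trans (mul_le_mul_of_nonneg_left
      (schattenNorm_diagonal_entirePow_le hb (by simp [hz]) hpq.nonneg) (schattenNorm_nonneg q C))
  · have hz : z.re = 1 := hz
    have hD := norm_diagonal_entirePow_le hb (z := 1 - z) zero_le_one (by simp [hz])
    have htrace := norm_trace_mul_mul_mul_le hpq.symm C (diagonal fun i => entirePow (a i) z)
      hK (norm_mul_le_one (norm_mul_le_one hL hD) hM)
    simp only [← mul_assoc] at htrace
    exact htrace.trans (mul_le_mul_of_nonneg_left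
      (schattenNorm_diagonal_entirePow_le ha hz hpq.nonneg) (schattenNorm_nonneg q C))

lemma entirePow_rpow_div {x p t : ℝ} (hx : 0 ≤ x) (hp : p ≠ 0) (ht : t ≠ 0) :
    entirePow (x ^ (t / p)) (p / t : ℝ) = x := by
  rw [entirePow_ofReal (Real.rpow_nonneg hx _) (div_ne_zero hp ht), ← Real.rpow_mul hx,
    div_mul_div_cancel₀ hp, div_self ht, Real.rpow_one]

lemma rpow_sum_rpow_div_rpow {ι : Type*} [Fintype ι] {x : ι → ℝ} (hx : 0 ≤ x) {p : ℝ} (hp : p ≠ 0)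
    (t : ℝ) :
    ((∑ i, (x i ^ (t / p)) ^ p) ^ (1 / p)) ^ (p / t) = (∑ i, x i ^ t) ^ (1 / t) := by
  simp only [← Real.rpow_mul (hx _), div_mul_cancel₀ t hp]
  rw [← Real.rpow_mul (Finset.sum_nonneg fun i _ => Real.rpow_nonneg (hx i) t),
    div_mul_div_cancel₀ hp]

lemma norm_trace_mul_diagonal_mul_mul_diagonal_mul_le {p q r s : ℝ} (hpq : p.HolderConjugate q)
    (hrs : r.HolderTriple s p) (C : Matrix n n ℂ) {K L M : Matrix n n ℂ} (hK : ‖K‖ ≤ 1)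
    (hL : ‖L‖ ≤ 1) (hM : ‖M‖ ≤ 1) {a b : n → ℝ} (ha : 0 ≤ a) (hb : 0 ≤ b) :
    ‖trace (C * K * diagonal (fun i => (a i : ℂ)) * L * diagonal (fun i => (b i : ℂ)) * M)‖ ≤
      schattenNorm q C * ((∑ i, a i ^ r) ^ (1 / r) * (∑ i, b i ^ s) ^ (1 / s)) := by
  have hr := hrs.pos
  have hs := hrs.symm.pos
  have hp := hpq.pos
  have hθ : 1 - p / r = p / s := by
    have := hrs.one_div_add_one_div
    field_simp at this ⊢
    linarith
  have hinterp := norm_interpolationTrace_le hpq C hK hL hM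
    (fun i => Real.rpow_nonneg (ha i) (r / p)) (fun i => Real.rpow_nonneg (hb i) (s / p))
    (θ := p / r) ⟨by positivity, by linarith [div_pos hp hs]⟩
  have h1θ : (1 : ℂ) - ((p / r : ℝ) : ℂ) = ((p / s : ℝ) : ℂ) := by rw [← hθ]; push_cast; rfl
  simp only [interpolationTrace, h1θ, entirePow_rpow_div (ha _) hp.ne' hr.ne',
    entirePow_rpow_div (hb _) hp.ne' hs.ne'] at hinterp
  have hnn {x : n → ℝ} (hx : 0 ≤ x) (t : ℝ) : 0 ≤ (∑ i, (x i ^ (t / p)) ^ p) ^ (1 / p) :=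
    Real.rpow_nonneg (Finset.sum_nonneg fun i _ =>
      Real.rpow_nonneg (Real.rpow_nonneg (hx i) _) _) _
  have hC := schattenNorm_nonneg q C
  rw [hθ, Real.mul_rpow hC (hnn hb s), Real.mul_rpow hC (hnn ha r),
    rpow_sum_rpow_div_rpow ha hp.ne', rpow_sum_rpow_div_rpow hb hp.ne'] at hinterp
  have hCsplit : schattenNorm q C ^ (p / s) * schattenNorm q C ^ (p / r) = schattenNorm q C := by
    rw [← Real.rpow_add_of_nonneg hC (by positivity) (by positivity), ← hθ, sub_add_cancel,
      Real.rpow_one]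
  refine hinterp.trans_eq ?_
  linear_combination ((∑ i, a i ^ r) ^ (1 / r) * (∑ i, b i ^ s) ^ (1 / s)) * hCsplit

theorem schattenNorm_mul_le {p r s : ℝ} (hp : 1 < p) (hrs : r.HolderTriple s p)
    (A B : Matrix n n ℂ) :
    schattenNorm p (A * B) ≤ schattenNorm r A * schattenNorm s B := by
  obtain ⟨U, hU, a, ha, V, hV, rfl, hA, -⟩ := exists_svd_schattenNorm A
  obtain ⟨X, hX, b, hb, Y, hY, rfl, hB, -⟩ := exists_svd_schattenNorm B
  refine schattenNorm_le_of_forall_norm_trace_mul_le (Real.HolderConjugate.conjExponent hp)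
    (mul_nonneg (schattenNorm_nonneg _ _) (schattenNorm_nonneg _ _)) fun C => ?_
  rw [hA, hB]
  have hVX := norm_mul_le_one (norm_le_one_of_mem_unitaryGroup hV)
    (norm_le_one_of_mem_unitaryGroup hX)
  simpa only [mul_assoc] using norm_trace_mul_diagonal_mul_mul_diagonal_mul_le
    (Real.HolderConjugate.conjExponent hp) hrs C (norm_le_one_of_mem_unitaryGroup hU) hVX
    (norm_le_one_of_mem_unitaryGroup hY) ha hb

lemma schattenNorm_mul_le_of_norm_le_one {p : ℝ} (hp : 1 < p) (A : Matrix n n ℂ)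
    {B : Matrix n n ℂ} (hB : ‖B‖ ≤ 1) : schattenNorm p (A * B) ≤ schattenNorm p A := by
  have hpq := Real.HolderConjugate.conjExponent hp
  refine schattenNorm_le_of_forall_norm_trace_mul_le hpq (schattenNorm_nonneg _ _) fun C => ?_
  simpa only [mul_one, mul_assoc] using norm_trace_mul_mul_mul_le hpq.symm C A
    (norm_le_one_of_mem_unitaryGroup (one_mem (unitaryGroup n ℂ))) hB

lemma schattenNorm_list_prod_le {P : ℝ} (l : List (Matrix n n ℂ)) (hl : l ≠ [])
    (hlP : l.length < P) :
    schattenNorm (P / l.length) l.prod ≤ (l.map (schattenNorm P)).prod := by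
  induction l with
  | nil => exact absurd rfl hl
  | cons A l ih =>
    rcases eq_or_ne l [] with rfl | hl'
    · simp
    have hlen : 0 < (l.length : ℝ) := by exact_mod_cast List.length_pos_iff.mpr hl'
    push_cast [List.length_cons] at hlP ⊢
    have hP : 0 < P := by linarith
    have htriple : P.HolderTriple (P / l.length) (P / (l.length + 1)) :=
      ⟨by field_simp; ring, hP, by positivity⟩
    rw [List.prod_cons, List.map_cons, List.prod_cons]
    refine (schattenNorm_mul_le ((one_lt_div (by positivity)).mpr hlP) htriple A l.prod).trans ?_
    exact mul_le_mul_of_nonneg_left (ih hl' (by linarith)) (schattenNorm_nonneg P A)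

theorem norm_trace_list_prod_le {N : ℕ} (hN : 2 ≤ N) (l : List (Matrix n n ℂ))
    (hl : l.length = N) : ‖trace l.prod‖ ≤ (l.map (schattenNorm N)).prod := by
  obtain ⟨A, t, rfl⟩ := List.exists_cons_of_length_pos (by omega : 0 < l.length)
  have ht : t.length + 1 = N := hl
  have ht0 : 0 < (t.length : ℝ) := by exact_mod_cast (by omega : 0 < t.length)
  have htN : (N : ℝ) = t.length + 1 := by exact_mod_cast ht.symm
  have hconj : (N : ℝ).HolderConjugate (N / t.length) := by
    rw [Real.holderConjugate_iff, htN]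
    exact ⟨by linarith, by field_simp; ring⟩
  rw [List.prod_cons, List.map_cons, List.prod_cons]
  refine (norm_trace_mul_le hconj A t.prod).trans
    (mul_le_mul_of_nonneg_left ?_ (schattenNorm_nonneg _ A))
  exact schattenNorm_list_prod_le t (List.length_pos_iff.mp (by omega)) (by linarith)

/-! ### The two-point inequality at even exponents -/

lemma trace_pow_eq_sum_eigenvalues_pow {𝕜 : Type*} [RCLike 𝕜] {A : Matrix n n 𝕜}
    (hA : A.IsHermitian) (N : ℕ) : trace (A ^ N) = ∑ i, (hA.eigenvalues i : 𝕜) ^ N := by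
  conv_lhs => rw [hA.spectral_theorem, ← map_pow, Unitary.conjStarAlgAut_apply, trace_mul_comm,
    ← mul_assoc, Unitary.coe_star_mul_self, one_mul, diagonal_pow, trace_diagonal]
  rfl

open scoped ComplexOrder in
lemma trace_conjTranspose_mul_self_pow {N : ℕ} (hN : N ≠ 0) (A : Matrix n n ℂ) :
    trace ((Aᴴ * A) ^ N) = ((schattenNorm (2 * N : ℕ) A ^ (2 * N) : ℝ) : ℂ) := by
  have hnn (i : n) := (posSemidef_conjTranspose_mul_self A).eigenvalues_nonneg i
  have hexp : ((2 * N : ℕ) : ℝ) / 2 = N := by push_cast; ring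
  rw [trace_pow_eq_sum_eigenvalues_pow (isHermitian_conjTranspose_mul_self A), schattenNorm,
    one_div, Real.rpow_inv_natCast_pow (Finset.sum_nonneg fun i _ => Real.rpow_nonneg (hnn i) _)
      (by positivity)]
  simp only [hexp, Real.rpow_natCast]
  push_cast
  rfl

section Alternating

variable {M : Type*}

/-- The word `P, Q, P, Q, …` of length `2 * N`, whose product is `(P * Q) ^ N`. -/
def alternatingWord (P Q : M) (N : ℕ) (i : Fin (2 * N)) : M := if Even i.val then P else Q

lemma prod_ofFn_alternatingWord [Monoid M] (P Q : M) (N : ℕ) :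
    (List.ofFn (alternatingWord P Q N)).prod = (P * Q) ^ N := by
  rw [List.ofFn_mul', List.prod_flatten, List.map_ofFn]
  simp [Function.comp_def, alternatingWord, parity_simps]

end Alternating

lemma norm_map_add_add_map_sub_le {ι E G : Type*} [Fintype ι] [DecidableEq ι] [AddCommGroup E]
    [Module ℝ E] [NormedAddCommGroup G] [NormedSpace ℝ G] (F : MultilinearMap ℝ (fun _ : ι => E) G)
    (a b : ι → E) {x y : ℝ}
    (h : ∀ s : Finset ι, ‖F (s.piecewise a b)‖ ≤ x ^ s.card * y ^ (Fintype.card ι - s.card)) :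
    ‖F (a + b) + F (a - b)‖ ≤ (x + y) ^ Fintype.card ι + (x - y) ^ Fintype.card ι := by
  set sgn : Finset ι → ℝ := fun s => (-1) ^ (Fintype.card ι - s.card)
  have hneg (s : Finset ι) : F (s.piecewise a (-b)) = sgn s • F (s.piecewise a b) := by
    have hsmul := F.map_piecewise_smul (fun _ => (-1 : ℝ)) (s.piecewise a b) sᶜ
    rw [Finset.prod_const, Finset.card_compl] at hsmul
    refine Eq.trans (congrArg F (funext fun i => ?_)) hsmul
    by_cases hi : i ∈ s <;> simp [hi]
  have hsgn (s : Finset ι) : 0 ≤ 1 + sgn s := by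
    rcases neg_one_pow_eq_or ℝ (Fintype.card ι - s.card) with h | h <;> simp [sgn, h]
  have hleft : F (a + b) + F (a - b) = ∑ s, (1 + sgn s) • F (s.piecewise a b) := by
    rw [sub_eq_add_neg, F.map_add_univ, F.map_add_univ, ← Finset.sum_add_distrib]
    exact Finset.sum_congr rfl fun s _ => by rw [hneg, add_smul, one_smul]
  have hright : (x + y) ^ Fintype.card ι + (x - y) ^ Fintype.card ι =
      ∑ s : Finset ι, (1 + sgn s) * (x ^ s.card * y ^ (Fintype.card ι - s.card)) := by
    rw [sub_eq_add_neg, ← Fintype.sum_pow_mul_eq_add_pow, ← Fintype.sum_pow_mul_eq_add_pow,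
      ← Finset.sum_add_distrib]
    exact Finset.sum_congr rfl fun s _ => by rw [neg_pow y]; ring
  rw [hleft, hright]
  refine norm_sum_le_of_le _ fun s _ => ?_
  rw [norm_smul, Real.norm_of_nonneg (hsgn s)]
  exact mul_le_mul_of_nonneg_left (h s) (hsgn s)

/-- The trace of a product of `N` matrices, as a real multilinear form. -/
noncomputable def traceProd (N : ℕ) : MultilinearMap ℝ (fun _ : Fin N => Matrix n n ℂ) ℂ :=
  (traceLinearMap n ℝ ℂ).compMultilinearMap (MultilinearMap.mkPiAlgebraFin ℝ N (Matrix n n ℂ))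

lemma traceProd_apply {N : ℕ} (A : Fin N → Matrix n n ℂ) :
    traceProd N A = trace (List.ofFn A).prod := rfl

lemma traceProd_alternatingWord {N : ℕ} (hN : N ≠ 0) (A : Matrix n n ℂ) :
    traceProd (2 * N) (alternatingWord Aᴴ A N) =
      ((schattenNorm (2 * N : ℕ) A ^ (2 * N) : ℝ) : ℂ) := by
  rw [traceProd_apply, prod_ofFn_alternatingWord, trace_conjTranspose_mul_self_pow hN]

lemma norm_traceProd_le {N : ℕ} (hN : 2 ≤ N) (A : Fin N → Matrix n n ℂ) :
    ‖traceProd N A‖ ≤ ∏ i, schattenNorm N (A i) := by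
  rw [traceProd_apply]
  simpa [List.prod_ofFn] using norm_trace_list_prod_le hN (List.ofFn A) (by simp)

lemma schattenNorm_alternatingWord (p : ℝ) (A : Matrix n n ℂ) {N : ℕ} (i : Fin (2 * N)) :
    schattenNorm p (alternatingWord Aᴴ A N i) = schattenNorm p A := by
  unfold alternatingWord
  split_ifs
  exacts [schattenNorm_conjTranspose p A, rfl]

lemma schattenNorm_add_pow_add_sub_pow_le {N : ℕ} (hN : N ≠ 0) (X Y : Matrix n n ℂ) :
    schattenNorm (2 * N : ℕ) (X + Y) ^ (2 * N) + schattenNorm (2 * N : ℕ) (X - Y) ^ (2 * N) ≤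
      (schattenNorm (2 * N : ℕ) X + schattenNorm (2 * N : ℕ) Y) ^ (2 * N) +
        (schattenNorm (2 * N : ℕ) X - schattenNorm (2 * N : ℕ) Y) ^ (2 * N) := by
  set ν := schattenNorm (n := n) (2 * N : ℕ)
  set a := alternatingWord Xᴴ X N
  set b := alternatingWord Yᴴ Y N
  have hadd : a + b = alternatingWord (X + Y)ᴴ (X + Y) N := by
    ext1 i
    rw [conjTranspose_add]
    exact (ite_add_ite ..).trans rfl
  have hsub : a - b = alternatingWord (X - Y)ᴴ (X - Y) N := by
    ext1 i
    rw [conjTranspose_sub]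
    exact (ite_sub_ite ..).trans rfl
  have hword (s : Finset (Fin (2 * N))) : ‖traceProd (2 * N) (s.piecewise a b)‖ ≤
      ν X ^ s.card * ν Y ^ (Fintype.card (Fin (2 * N)) - s.card) := by
    refine (norm_traceProd_le (by omega) _).trans_eq ?_
    have hpiece (i : Fin (2 * N)) :
        ν (s.piecewise a b i) = s.piecewise (fun _ => ν X) (fun _ => ν Y) i := by
      by_cases hi : i ∈ s <;> simp [hi, a, b, ν, schattenNorm_alternatingWord]
    simp only [ν] at hpiece ⊢
    simp only [hpiece, Finset.prod_piecewise, Finset.univ_inter, Finset.prod_const,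
      Finset.card_univ_sdiff]
  have hmain := norm_map_add_add_map_sub_le (traceProd (2 * N)) a b hword
  rw [hadd, hsub, traceProd_alternatingWord hN, traceProd_alternatingWord hN, Fintype.card_fin,
    ← Complex.ofReal_add, Complex.norm_real] at hmain
  exact (le_abs_self _).trans hmain

lemma choose_two_mul_le (N j : ℕ) :
    (2 * N).choose (2 * j) ≤ N.choose j * (2 * N - 1) ^ j := by
  induction j with
  | zero => simp
  | succ j ih =>
    have hodd := Nat.choose_succ_right_eq (2 * N) (2 * j)
    have heven := Nat.choose_succ_right_eq (2 * N) (2 * j + 1)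
    rw [← Nat.mul_sub] at hodd
    refine Nat.le_of_mul_le_mul_right ?_ j.succ_pos
    calc (2 * N).choose (2 * (j + 1)) * (j + 1)
        ≤ (2 * N).choose (2 * j + 1 + 1) * ((2 * j + 1) * (j + 1)) :=
          Nat.mul_le_mul_left _ (Nat.le_mul_of_pos_left _ (2 * j).succ_pos)
      _ = (2 * N).choose (2 * j) * ((N - j) * (2 * N - (2 * j + 1))) :=
          Nat.eq_of_mul_eq_mul_left two_pos (by
            linear_combination (2 * j + 1) * heven + (2 * N - (2 * j + 1)) * hodd)
      _ ≤ N.choose j * (2 * N - 1) ^ j * ((N - j) * (2 * N - 1)) := by gcongr; omega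
      _ = N.choose (j + 1) * (2 * N - 1) ^ (j + 1) * (j + 1) := by
          linear_combination (2 * N - 1) ^ (j + 1) * (Nat.choose_succ_right_eq N j).symm

lemma sum_range_two_mul_add_one {M : Type*} [AddCommMonoid M] (f : ℕ → M) (N : ℕ) :
    ∑ j ∈ Finset.range (2 * N + 1), f j =
      ∑ i ∈ Finset.range (N + 1), f (2 * i) + ∑ i ∈ Finset.range N, f (2 * i + 1) := by
  induction N with
  | zero => simp
  | succ N ih =>
    rw [mul_add_one, Finset.sum_range_succ, Finset.sum_range_succ, ih,
      Finset.sum_range_succ (fun i => f (2 * i)) (N + 1),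
      Finset.sum_range_succ (fun i => f (2 * i + 1)) N, mul_add_one]
    abel

lemma add_pow_two_mul_add_sub_pow_two_mul {R : Type*} [CommRing R] (x y : R) (N : ℕ) :
    (x + y) ^ (2 * N) + (x - y) ^ (2 * N) =
      2 * ∑ i ∈ Finset.range (N + 1),
        (y ^ 2) ^ i * (x ^ 2) ^ (N - i) * ((2 * N).choose (2 * i) : R) := by
  rw [add_comm x y, sub_eq_neg_add, add_pow, add_pow, ← Finset.sum_add_distrib,
    sum_range_two_mul_add_one, Finset.mul_sum, Finset.sum_eq_zero (s := Finset.range N), add_zero]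
  · refine Finset.sum_congr rfl fun i _ => ?_
    rw [(even_two_mul i).neg_pow, ← Nat.mul_sub, pow_mul, pow_mul]
    ring
  · intro i _
    rw [(odd_two_mul_add_one i).neg_pow]
    ring

lemma add_pow_two_mul_add_sub_pow_two_mul_le {N : ℕ} (hN : N ≠ 0) (x y : ℝ) :
    (x + y) ^ (2 * N) + (x - y) ^ (2 * N) ≤ 2 * (x ^ 2 + (2 * N - 1) * y ^ 2) ^ N := by
  have hcast : (2 * N - 1 : ℝ) = (2 * N - 1 : ℕ) := by
    rw [Nat.cast_sub (by omega)]
    push_cast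
    rfl
  rw [add_pow_two_mul_add_sub_pow_two_mul, add_comm (x ^ 2), add_pow]
  refine mul_le_mul_of_nonneg_left (Finset.sum_le_sum fun i _ => ?_) zero_le_two
  calc (y ^ 2) ^ i * (x ^ 2) ^ (N - i) * ((2 * N).choose (2 * i) : ℝ)
      ≤ (y ^ 2) ^ i * (x ^ 2) ^ (N - i) * (N.choose i * (2 * N - 1) ^ i) := by
        rw [hcast]
        gcongr
        exact_mod_cast choose_two_mul_le N i
    _ = ((2 * N - 1) * y ^ 2) ^ i * (x ^ 2) ^ (N - i) * N.choose i := by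
        rw [mul_pow]
        ring

lemma schattenNorm_add_sq_add_sub_sq_le {N : ℕ} (hN : N ≠ 0) (X Y : Matrix n n ℂ) :
    schattenNorm (2 * N : ℕ) (X + Y) ^ 2 + schattenNorm (2 * N : ℕ) (X - Y) ^ 2 ≤
      2 * (schattenNorm (2 * N : ℕ) X ^ 2 + (2 * N - 1) * schattenNorm (2 * N : ℕ) Y ^ 2) := by
  set ν := schattenNorm (n := n) (2 * N : ℕ)
  have hN1 : (0 : ℝ) ≤ 2 * N - 1 := by
    have : (1 : ℝ) ≤ N := by exact_mod_cast Nat.one_le_iff_ne_zero.mpr hN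
    linarith
  refine (pow_le_pow_iff_left₀ (by positivity) (by positivity) hN).mp ?_
  calc (ν (X + Y) ^ 2 + ν (X - Y) ^ 2) ^ N
      ≤ 2 ^ (N - 1) * ((ν (X + Y) ^ 2) ^ N + (ν (X - Y) ^ 2) ^ N) :=
        add_pow_le (sq_nonneg _) (sq_nonneg _) N
    _ ≤ 2 ^ (N - 1) * (2 * (ν X ^ 2 + (2 * N - 1) * ν Y ^ 2) ^ N) := by
        rw [← pow_mul, ← pow_mul]
        exact mul_le_mul_of_nonneg_left ((schattenNorm_add_pow_add_sub_pow_le hN X Y).trans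
          (add_pow_two_mul_add_sub_pow_two_mul_le hN _ _)) (by positivity)
    _ = (2 * (ν X ^ 2 + (2 * N - 1) * ν Y ^ 2)) ^ N := by
        rw [mul_pow, ← mul_assoc, pow_sub_one_mul hN]

lemma le_add_mul_sq_of_add_add_sub_le {g : ℝ → ℝ} {C : ℝ}
    (hdiff : ∀ s h, g (s + h) + g (s - h) ≤ 2 * g s + 2 * C * h ^ 2) (hmin : ∀ t, g 0 ≤ g t)
    (t : ℝ) : g t ≤ g 0 + C * t ^ 2 := by
  have happrox (k : ℕ) : ∀ t, g t ≤ g 0 + C * (1 + (1 / 2) ^ k) * t ^ 2 := by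
    induction k with
    | zero =>
      intro t
      have h0 := hdiff 0 t
      rw [zero_add, zero_sub] at h0
      linarith [hmin (-t)]
    | succ k ih =>
      intro t
      have hhalf := hdiff (t / 2) (t / 2)
      rw [add_halves, sub_self] at hhalf
      rw [pow_succ]
      linarith [ih (t / 2)]
  have hlim := ((((tendsto_pow_atTop_nhds_zero_of_lt_one (by norm_num)
    (by norm_num : (1 / 2 : ℝ) < 1)).const_add 1).const_mul C).mul_const (t ^ 2)).const_add (g 0)
  rw [add_zero, mul_one] at hlim
  exact ge_of_tendsto' hlim fun k => happrox k t

lemma schattenNorm_le_schattenNorm_add {N : ℕ} (hN : N ≠ 0) {X Y : Matrix n n ℂ}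
    (h : trace ((Xᴴ * X) ^ (N - 1) * Xᴴ * Y) = 0) :
    schattenNorm (2 * N : ℕ) X ≤ schattenNorm (2 * N : ℕ) (X + Y) := by
  set ν := schattenNorm (n := n) (2 * N : ℕ)
  have hword : (List.ofFn (alternatingWord Xᴴ X (N - 1)) ++ [Xᴴ, X + Y]).prod =
      (Xᴴ * X) ^ N + (Xᴴ * X) ^ (N - 1) * Xᴴ * Y := by
    rw [List.prod_append, prod_ofFn_alternatingWord, ← pow_sub_one_mul hN]
    simp only [List.prod_cons, List.prod_nil, mul_one, mul_add, mul_assoc]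
  have hholder := norm_trace_list_prod_le (N := 2 * N) (by omega)
    (List.ofFn (alternatingWord Xᴴ X (N - 1)) ++ [Xᴴ, X + Y]) (by simp; omega)
  rw [hword, trace_add, h, add_zero, trace_conjTranspose_mul_self_pow hN, Complex.norm_real,
    Real.norm_of_nonneg (pow_nonneg (schattenNorm_nonneg _ X) _)] at hholder
  have hnorms : ((List.ofFn (alternatingWord Xᴴ X (N - 1)) ++ [Xᴴ, X + Y]).map ν).prod =
      ν X ^ (2 * N - 1) * ν (X + Y) := by
    simp only [List.map_append, List.map_ofFn, List.map_cons, List.map_nil, List.prod_append,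
      List.prod_ofFn, List.prod_cons, List.prod_nil, Function.comp_apply, Finset.prod_const,
      Finset.card_univ, Fintype.card_fin, mul_one, schattenNorm_alternatingWord,
      schattenNorm_conjTranspose, ν]
    rw [← mul_assoc, ← pow_succ]
    congr 2
    omega
  rw [hnorms, ← pow_sub_one_mul (by omega : 2 * N ≠ 0)] at hholder
  rcases (schattenNorm_nonneg (2 * N : ℕ) X).eq_or_lt with h0 | hpos
  · exact h0.symm.trans_le (schattenNorm_nonneg _ _)
  · exact le_of_mul_le_mul_left hholder (pow_pos hpos _)

theorem schattenNorm_add_sq_le {N : ℕ} (hN : N ≠ 0) {X Y : Matrix n n ℂ}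
    (h : trace ((Xᴴ * X) ^ (N - 1) * Xᴴ * Y) = 0) :
    schattenNorm (2 * N : ℕ) (X + Y) ^ 2 ≤
      schattenNorm (2 * N : ℕ) X ^ 2 + (2 * N - 1) * schattenNorm (2 * N : ℕ) Y ^ 2 := by
  set ν := schattenNorm (n := n) (2 * N : ℕ)
  have hdiff (s t : ℝ) : ν (X + ((s + t : ℝ) : ℂ) • Y) ^ 2 + ν (X + ((s - t : ℝ) : ℂ) • Y) ^ 2 ≤
      2 * ν (X + (s : ℂ) • Y) ^ 2 + 2 * ((2 * N - 1) * ν Y ^ 2) * t ^ 2 := by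
    have hpair := schattenNorm_add_sq_add_sub_sq_le hN (X + (s : ℂ) • Y) ((t : ℂ) • Y)
    rw [schattenNorm_smul (by positivity), Complex.norm_real, mul_pow, Real.norm_eq_abs,
      sq_abs, add_assoc, add_sub_assoc, ← add_smul, ← sub_smul] at hpair
    push_cast
    linarith
  have hmin (t : ℝ) : ν (X + ((0 : ℝ) : ℂ) • Y) ^ 2 ≤ ν (X + (t : ℂ) • Y) ^ 2 := by
    rw [Complex.ofReal_zero, zero_smul, add_zero]
    refine pow_le_pow_left₀ (schattenNorm_nonneg _ _) (schattenNorm_le_schattenNorm_add hN ?_) 2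
    rw [mul_smul_comm, trace_smul, h, smul_zero]
  simpa using le_add_mul_sq_of_add_add_sub_le (g := fun t => ν (X + (t : ℂ) • Y) ^ 2) hdiff hmin 1

/-! ### Normalized norms -/

lemma exists_nschattenNorm_eq (A : Matrix n n ℂ) :
    ∃ s : n → ℝ, 0 ≤ s ∧ ‖s‖ = ‖A‖ ∧
      ∀ p, nschattenNorm p A = ((∑ i, s i ^ p) / Fintype.card n) ^ (1 / p) := by
  obtain ⟨-, -, s, hs, -, -, -, hA, hnorm⟩ := exists_svd_schattenNorm A
  refine ⟨s, hs, hnorm, fun p => ?_⟩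
  rw [nschattenNorm, hA, schattenNorm_one,
    Real.div_rpow (Finset.sum_nonneg fun i _ => Real.rpow_nonneg (hs i) p) (Nat.cast_nonneg _)]

lemma nschattenNorm_nonneg (p : ℝ) (A : Matrix n n ℂ) : 0 ≤ nschattenNorm p A :=
  div_nonneg (schattenNorm_nonneg p A) (schattenNorm_nonneg p 1)

lemma nschattenNorm_le_norm {p : ℝ} (hp : 0 < p) (A : Matrix n n ℂ) : nschattenNorm p A ≤ ‖A‖ := by
  obtain ⟨s, hs, hnorm, hA⟩ := exists_nschattenNorm_eq A
  have hsum : ∑ i, s i ^ p ≤ ‖s‖ ^ p * Fintype.card n := by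
    rw [mul_comm, ← nsmul_eq_mul]
    exact Finset.sum_le_card_nsmul _ _ _ fun i _ =>
      Real.rpow_le_rpow (hs i) ((le_abs_self _).trans (norm_le_pi_norm s i)) hp.le
  rw [hA, ← hnorm, one_div,
    Real.rpow_inv_le_iff_of_pos
      (div_nonneg (Finset.sum_nonneg fun i _ => Real.rpow_nonneg (hs i) p) (Nat.cast_nonneg _))
      (norm_nonneg s) hp]
  exact div_le_of_le_mul₀ (Nat.cast_nonneg _) (by positivity) hsum

lemma nschattenNorm_pos (p : ℝ) {A : Matrix n n ℂ} (hA : A ≠ 0) : 0 < nschattenNorm p A := by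
  obtain ⟨s, hs, hnorm, hsA⟩ := exists_nschattenNorm_eq A
  obtain ⟨i, hi⟩ : ∃ i, s i ≠ 0 :=
    Function.ne_iff.mp (norm_ne_zero_iff.mp (hnorm ▸ norm_ne_zero_iff.mpr hA))
  have : Nonempty n := ⟨i⟩
  rw [hsA]
  refine Real.rpow_pos_of_pos (div_pos ?_ (Nat.cast_pos.mpr Fintype.card_pos)) _
  exact Finset.sum_pos' (fun j _ => Real.rpow_nonneg (hs j) p)
    ⟨i, Finset.mem_univ i, Real.rpow_pos_of_pos ((hs i).lt_of_ne' hi) p⟩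

lemma nschattenNorm_mul_le {p r s : ℝ} (hp : 1 < p) (hrs : r.HolderTriple s p)
    (A B : Matrix n n ℂ) :
    nschattenNorm p (A * B) ≤ nschattenNorm r A * nschattenNorm s B := by
  have hone : schattenNorm p (1 : Matrix n n ℂ) =
      schattenNorm r (1 : Matrix n n ℂ) * schattenNorm s (1 : Matrix n n ℂ) := by
    simp only [schattenNorm_one, one_div, ← hrs.inv_add_inv_eq_inv]
    exact Real.rpow_add_of_nonneg (Nat.cast_nonneg _) (inv_nonneg.mpr hrs.left_pos.le)
      (inv_nonneg.mpr hrs.right_pos.le)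
  rw [nschattenNorm, nschattenNorm, nschattenNorm, div_mul_div_comm, ← hone]
  exact div_le_div_of_nonneg_right (schattenNorm_mul_le hp hrs A B) (schattenNorm_nonneg p 1)

lemma nschattenNorm_mul_le_of_norm_le_one {p : ℝ} (hp : 1 < p) (A : Matrix n n ℂ)
    {B : Matrix n n ℂ} (hB : ‖B‖ ≤ 1) : nschattenNorm p (A * B) ≤ nschattenNorm p A :=
  div_le_div_of_nonneg_right (schattenNorm_mul_le_of_norm_le_one hp A hB) (schattenNorm_nonneg p 1)

lemma nschattenNorm_le_rpow_of_norm_le_one {p q : ℝ} (hp : 0 < p) (hpq : p ≤ q)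
    {A : Matrix n n ℂ} (hA : ‖A‖ ≤ 1) : nschattenNorm q A ≤ nschattenNorm p A ^ (p / q) := by
  obtain ⟨s, hs, hnorm, hsA⟩ := exists_nschattenNorm_eq A
  have hs1 (i : n) : s i ≤ 1 :=
    (le_abs_self _).trans ((norm_le_pi_norm s i).trans (hnorm.trans_le hA))
  have hsum (t : ℝ) : 0 ≤ ∑ i, s i ^ t :=
    Finset.sum_nonneg fun i _ => Real.rpow_nonneg (hs i) t
  have hq : 0 < q := hp.trans_le hpq
  rw [hsA, hsA, ← Real.rpow_mul (div_nonneg (hsum p) (Nat.cast_nonneg _)),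
    one_div_mul_eq_div, div_div_cancel_left' hp.ne', one_div]
  refine Real.rpow_le_rpow (div_nonneg (hsum q) (Nat.cast_nonneg _))
    (div_le_div_of_nonneg_right (Finset.sum_le_sum fun i _ => ?_) (Nat.cast_nonneg _))
    (inv_nonneg.mpr hq.le)
  exact Real.rpow_le_rpow_of_exponent_ge_of_imp (hs i) (hs1 i) hpq fun _ h => absurd h hq.ne'

lemma nschattenNorm_mul_le_mul_rpow {p r : ℝ} (hp : 1 < p) (hpr : p ≤ r) (A : Matrix n n ℂ)
    {B : Matrix n n ℂ} (hB : ‖B‖ ≤ 1) :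
    nschattenNorm p (A * B) ≤ nschattenNorm r A * nschattenNorm p B ^ (1 - p / r) := by
  have hp0 : 0 < p := one_pos.trans hp
  rcases hpr.eq_or_lt with rfl | hlt
  · rw [div_self hp0.ne', sub_self, Real.rpow_zero, mul_one]
    exact nschattenNorm_mul_le_of_norm_le_one hp A hB
  have hinv : 0 < p⁻¹ - r⁻¹ := sub_pos.mpr (inv_strictAnti₀ hp0 hlt)
  have hrs : r.HolderTriple (p⁻¹ - r⁻¹)⁻¹ p :=
    ⟨by rw [inv_inv, add_sub_cancel], hp0.trans hlt, inv_pos.mpr hinv⟩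
  have hps : p ≤ (p⁻¹ - r⁻¹)⁻¹ :=
    le_inv_of_le_inv₀ hinv (sub_le_self _ (inv_nonneg.mpr hrs.left_pos.le))
  calc nschattenNorm p (A * B)
      ≤ nschattenNorm r A * nschattenNorm (p⁻¹ - r⁻¹)⁻¹ B := nschattenNorm_mul_le hp hrs A B
    _ ≤ nschattenNorm r A * nschattenNorm p B ^ (p / (p⁻¹ - r⁻¹)⁻¹) :=
        mul_le_mul_of_nonneg_left (nschattenNorm_le_rpow_of_norm_le_one hp0 hps hB)
          (nschattenNorm_nonneg r A)
    _ = nschattenNorm r A * nschattenNorm p B ^ (1 - p / r) := by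
        rw [div_inv_eq_mul, mul_sub, mul_inv_cancel₀ hp0.ne', div_eq_mul_inv]

lemma schattenNorm_le_rpow_mul_rpow {a b r θ : ℝ} (ha : 0 < a) (hb : 0 < b) (hr : 0 < r)
    (hθ : θ ∈ Set.Icc 0 1) (hrab : r⁻¹ = (1 - θ) / a + θ / b) (A : Matrix n n ℂ) :
    schattenNorm r A ≤ schattenNorm a A ^ (1 - θ) * schattenNorm b A ^ θ := by
  rcases hθ.1.eq_or_lt with rfl | hθ0
  · obtain rfl : r = a := inv_injective (by simpa using hrab)
    simp
  rcases hθ.2.eq_or_lt with rfl | hθ1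
  · obtain rfl : r = b := inv_injective (by simpa using hrab)
    simp
  have hθ1' : 0 < 1 - θ := sub_pos.mpr hθ1
  obtain ⟨-, -, s, hs, -, -, -, hA, -⟩ := exists_svd_schattenNorm A
  have hsum (t : ℝ) : 0 ≤ ∑ i, s i ^ t :=
    Finset.sum_nonneg fun i _ => Real.rpow_nonneg (hs i) t
  have hholder : (a / (1 - θ)).HolderTriple (b / θ) r :=
    ⟨by rw [inv_div, inv_div, hrab], div_pos ha hθ1', div_pos hb hθ0⟩
  have hfg (i : n) : s i ^ (1 - θ) * s i ^ θ = s i := by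
    rw [← Real.rpow_add_of_nonneg (hs i) hθ1'.le hθ0.le, sub_add_cancel, Real.rpow_one]
  have hf (i : n) : (s i ^ (1 - θ)) ^ (a / (1 - θ)) = s i ^ a := by
    rw [← Real.rpow_mul (hs i), mul_div_cancel₀ a hθ1'.ne']
  have hg (i : n) : (s i ^ θ) ^ (b / θ) = s i ^ b := by
    rw [← Real.rpow_mul (hs i), mul_div_cancel₀ b hθ0.ne']
  have hle := Real.Lr_rpow_le_Lp_mul_Lq_of_nonneg Finset.univ hholder
    (fun i _ => Real.rpow_nonneg (hs i) (1 - θ)) (fun i _ => Real.rpow_nonneg (hs i) θ)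
  simp only [hfg, hf, hg] at hle
  have hroot (t u : ℝ) : 0 ≤ ((∑ i, s i ^ t) ^ (1 / t)) ^ u :=
    Real.rpow_nonneg (Real.rpow_nonneg (hsum t) _) _
  rw [hA, hA, hA, one_div, Real.rpow_inv_le_iff_of_pos (hsum r) (mul_nonneg (hroot a _) (hroot b _))
    hr, Real.mul_rpow (hroot a _) (hroot b _)]
  simp only [← Real.rpow_mul (hsum _)]
  refine hle.trans_eq ?_
  congr 2 <;> field_simp

lemma nschattenNorm_le_rpow_mul_rpow {a b r θ : ℝ} (ha : 0 < a) (hb : 0 < b) (hr : 0 < r)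
    (hθ : θ ∈ Set.Icc 0 1) (hrab : r⁻¹ = (1 - θ) / a + θ / b) (A : Matrix n n ℂ) :
    nschattenNorm r A ≤ nschattenNorm a A ^ (1 - θ) * nschattenNorm b A ^ θ := by
  have hθ' : 0 ≤ 1 - θ := sub_nonneg.mpr hθ.2
  have hone : schattenNorm r (1 : Matrix n n ℂ) =
      schattenNorm a (1 : Matrix n n ℂ) ^ (1 - θ) * schattenNorm b (1 : Matrix n n ℂ) ^ θ := by
    simp only [schattenNorm_one, ← Real.rpow_mul (Nat.cast_nonneg _), one_div_mul_eq_div]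
    rw [← Real.rpow_add_of_nonneg (Nat.cast_nonneg _) (div_nonneg hθ' ha.le)
      (div_nonneg hθ.1 hb.le), one_div, hrab]
  simp only [nschattenNorm, Real.div_rpow (schattenNorm_nonneg _ _) (schattenNorm_nonneg _ _)]
  rw [div_mul_div_comm, ← hone]
  exact div_le_div_of_nonneg_right (schattenNorm_le_rpow_mul_rpow ha hb hr hθ hrab A)
    (schattenNorm_nonneg r 1)

lemma exists_even_interpolation {r : ℝ} (hr : 2 ≤ r) :
    ∃ N : ℕ, N ≠ 0 ∧ ∃ θ ∈ Set.Icc (0 : ℝ) 1,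
      r⁻¹ = (1 - θ) / (2 * N) + θ / (2 * (N + 1)) ∧
      (2 * N - 1 : ℝ) ^ (1 - θ) * (2 * N + 1 : ℝ) ^ θ ≤ r := by
  set N := ⌊r / 2⌋₊
  have hN : 1 ≤ N := (Nat.one_le_floor_iff _).mpr (by linarith)
  have hN1 : (1 : ℝ) ≤ N := by exact_mod_cast hN
  obtain ⟨t, ht⟩ : ∃ t, r = 2 * (N + t) := ⟨r / 2 - N, by ring⟩
  have ht0 : 0 ≤ t := by linarith [Nat.floor_le (by linarith : 0 ≤ r / 2)]
  have ht1 : t ≤ 1 := by linarith [Nat.lt_floor_add_one (r / 2)]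
  have hNt : 0 < (N : ℝ) + t := by linarith
  set θ := t * (N + 1) / (N + t)
  have hθ0 : 0 ≤ θ := by positivity
  have hθ : 1 - θ = N * (1 - t) / (N + t) := by
    simp only [θ]
    field_simp
    ring
  have hθ1 : 0 ≤ 1 - θ := hθ ▸ div_nonneg (mul_nonneg (by linarith) (by linarith)) hNt.le
  refine ⟨N, by omega, θ, ⟨hθ0, by linarith⟩, ?_, ?_⟩
  · rw [hθ, ht]
    simp only [θ]
    field_simp
    ring
  calc (2 * N - 1 : ℝ) ^ (1 - θ) * (2 * N + 1 : ℝ) ^ θ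
      ≤ (1 - θ) * (2 * N - 1) + θ * (2 * N + 1) :=
        Real.geom_mean_le_arith_mean2_weighted hθ1 hθ0 (by linarith) (by linarith) (by ring)
    _ = 2 * N - 1 + 2 * θ := by ring
    _ ≤ r := by
        have : θ ≤ t + 1 / 2 := (div_le_iff₀ hNt).mpr (by nlinarith)
        linarith

lemma nschattenNorm_le_rpow_mul_of_forall_even {κ B : ℝ} (hκ : 0 ≤ κ) (hB : 0 ≤ B)
    {A : Matrix n n ℂ}
    (hA : ∀ N : ℕ, N ≠ 0 → nschattenNorm (2 * N : ℕ) A ≤ (2 * N - 1 : ℝ) ^ κ * B)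
    {r : ℝ} (hr : 2 ≤ r) : nschattenNorm r A ≤ r ^ κ * B := by
  obtain ⟨N, hN, θ, hθ, hrN, hmean⟩ := exists_even_interpolation hr
  have hN1 : (1 : ℝ) ≤ N := by exact_mod_cast Nat.one_le_iff_ne_zero.mpr hN
  have hθ' : 0 ≤ 1 - θ := sub_nonneg.mpr hθ.2
  have hlow : 0 ≤ (2 * N - 1 : ℝ) := by linarith
  have hhigh : 0 ≤ (2 * N + 1 : ℝ) := by linarith
  have hA0 := hA N hN
  have hA1 := hA (N + 1) N.succ_ne_zero
  push_cast at hA0 hA1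
  rw [show 2 * ((N : ℝ) + 1) - 1 = 2 * N + 1 by ring] at hA1
  calc nschattenNorm r A
      ≤ nschattenNorm (2 * N) A ^ (1 - θ) * nschattenNorm (2 * (N + 1)) A ^ θ :=
        nschattenNorm_le_rpow_mul_rpow (by linarith) (by linarith) (by linarith) hθ hrN A
    _ ≤ ((2 * N - 1) ^ κ * B) ^ (1 - θ) * ((2 * N + 1) ^ κ * B) ^ θ := by
        exact mul_le_mul (Real.rpow_le_rpow (nschattenNorm_nonneg _ A) hA0 hθ')
          (Real.rpow_le_rpow (nschattenNorm_nonneg _ A) hA1 hθ.1)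
          (Real.rpow_nonneg (nschattenNorm_nonneg _ A) θ) (by positivity)
    _ = ((2 * N - 1) ^ (1 - θ) * (2 * N + 1) ^ θ) ^ κ * B := by
        rw [Real.mul_rpow (by positivity) hB, Real.mul_rpow (by positivity) hB,
          Real.mul_rpow (by positivity) (by positivity), mul_mul_mul_comm,
          ← Real.rpow_add_of_nonneg hB hθ' hθ.1, sub_add_cancel, Real.rpow_one]
        simp only [← Real.rpow_mul hlow, ← Real.rpow_mul hhigh, mul_comm κ]
    _ ≤ r ^ κ * B := by gcongr

lemma rpow_one_sub_inv_abs_log_add_one_le {x : ℝ} (hx : 0 < x) :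
    x ^ (1 - (|Real.log x| + 1)⁻¹) ≤ Real.exp 1 * x := by
  have hpos : 0 < |Real.log x| + 1 := by positivity
  have hexp : -Real.log x * (|Real.log x| + 1)⁻¹ ≤ 1 := by
    rw [← div_eq_mul_inv, div_le_one hpos]
    linarith [neg_abs_le (Real.log x)]
  calc x ^ (1 - (|Real.log x| + 1)⁻¹)
      = Real.exp (-Real.log x * (|Real.log x| + 1)⁻¹) * x := by
        rw [sub_eq_neg_add, Real.rpow_add_one hx.ne', Real.rpow_def_of_pos hx, mul_neg, neg_mul]
    _ ≤ Real.exp 1 * x := by gcongr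

lemma nschattenNorm_mul_le_of_forall_le_rpow_mul {p κ C : ℝ} (hp : 1 < p)
    {A B : Matrix n n ℂ} (hA : ∀ r, p ≤ r → nschattenNorm r A ≤ r ^ κ * C)
    (hB : B ≠ 0) (hBnorm : ‖B‖ ≤ 1) :
    nschattenNorm p (A * B) ≤ Real.exp 1 * p ^ κ * C * nschattenNorm p B *
      (|Real.log (nschattenNorm p B)| + 1) ^ κ := by
  set x := nschattenNorm p B
  set L := |Real.log x| + 1
  have hp0 : 0 < p := one_pos.trans hp
  have hL1 : 1 ≤ L := le_add_of_nonneg_left (abs_nonneg _)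
  have hpL : p ≤ p * L := le_mul_of_one_le_right hp0.le hL1
  have hxpos : 0 < x := nschattenNorm_pos p hB
  calc nschattenNorm p (A * B)
      ≤ nschattenNorm (p * L) A * x ^ (1 - p / (p * L)) :=
        nschattenNorm_mul_le_mul_rpow hp hpL A hBnorm
    _ ≤ ((p * L) ^ κ * C) * (Real.exp 1 * x) := by
        rw [div_mul_cancel_left₀ hp0.ne']
        exact mul_le_mul (hA _ hpL) (rpow_one_sub_inv_abs_log_add_one_le hxpos) (by positivity)
          ((nschattenNorm_nonneg _ A).trans (hA _ hpL))
    _ = Real.exp 1 * p ^ κ * C * x * L ^ κ := by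
        rw [Real.mul_rpow hp0.le (by positivity)]
        ring

end Schatten

section Sites

open Matrix
open scoped Matrix.Norms.L2Operator

/-! ### Local operators -/

lemma eq_update_and_apply_eq_iff {ι : Type*} [DecidableEq ι] {β : ι → Type*} {i : ι} {a b : β i}
    {f g : ∀ j, β j} :
    f i = a ∧ g = Function.update f i b ↔ g i = b ∧ f = Function.update g i a := by
  constructor
  all_goals
    rintro ⟨rfl, rfl⟩
    simp

variable {m : ℕ} {Q : Fin m → Type*} [∀ x, DecidableEq (Q x)] {x : Fin m}

/-- The matrix unit `|u⟩⟨v|` on the qudit at site `x`, tensored with the identity on all other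
qudits. -/
def siteUnit (x : Fin m) (u v : Q x) : Matrix (∀ y, Q y) (∀ y, Q y) ℂ :=
  of fun f g => if f x = u ∧ g = Function.update f x v then 1 else 0

lemma siteUnit_apply (u v : Q x) (f g : ∀ y, Q y) :
    siteUnit x u v f g = if f x = u ∧ g = Function.update f x v then 1 else 0 := rfl

lemma siteUnit_apply' (u v : Q x) (f g : ∀ y, Q y) :
    siteUnit x u v f g = if g x = v ∧ f = Function.update g x u then 1 else 0 :=
  if_congr eq_update_and_apply_eq_iff rfl rfl

lemma conjTranspose_siteUnit (u v : Q x) : (siteUnit x u v)ᴴ = siteUnit x v u := by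
  ext f g
  rw [conjTranspose_apply, siteUnit_apply', siteUnit_apply, apply_ite star, star_one, star_zero]

variable [∀ x, Fintype (Q x)] {A B : Matrix (∀ y, Q y) (∀ y, Q y) ℂ}

lemma mul_siteUnit_apply (A : Matrix (∀ y, Q y) (∀ y, Q y) ℂ) (u v : Q x) (f g : ∀ y, Q y) :
    (A * siteUnit x u v) f g = if g x = v then A f (Function.update g x u) else 0 := by
  by_cases h : g x = v <;> simp [Matrix.mul_apply, siteUnit_apply', h]

lemma siteUnit_mul_apply (u v : Q x) (A : Matrix (∀ y, Q y) (∀ y, Q y) ℂ) (f g : ∀ y, Q y) :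
    (siteUnit x u v * A) f g = if f x = u then A (Function.update f x v) g else 0 := by
  by_cases h : f x = u <;> simp [Matrix.mul_apply, siteUnit_apply, h]

lemma siteUnit_mul_siteUnit (u v w : Q x) :
    siteUnit x u v * siteUnit x v w = siteUnit x u w := by
  ext f g
  by_cases h : f x = u <;> simp [siteUnit_mul_apply, siteUnit_apply, h]

variable (x) in
lemma sum_siteUnit_self : ∑ u, siteUnit x u u = (1 : Matrix (∀ y, Q y) (∀ y, Q y) ℂ) := by
  ext f g
  rw [Matrix.sum_apply, Finset.sum_eq_single (f x)]
  · simp [siteUnit_apply, one_apply, eq_comm]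
  · intro u _ hu
    simp [siteUnit_apply, hu.symm]
  · simp

/-- `A` acts as the identity on the qudit at site `x`, expressed as membership in the commutant of
the operators on that qudit. -/
def ActsTriviallyAt (x : Fin m) (A : Matrix (∀ y, Q y) (∀ y, Q y) ℂ) : Prop :=
  ∀ u v, Commute A (siteUnit x u v)

lemma ActsTriviallyAt.conjTranspose (hA : ActsTriviallyAt x A) : ActsTriviallyAt x Aᴴ := by
  intro u v
  rw [← conjTranspose_siteUnit]
  exact (hA v u).star_star

lemma ActsTriviallyAt.mul (hA : ActsTriviallyAt x A) (hB : ActsTriviallyAt x B) :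
    ActsTriviallyAt x (A * B) :=
  fun u v => (hA u v).mul_left (hB u v)

lemma ActsTriviallyAt.pow (hA : ActsTriviallyAt x A) (N : ℕ) : ActsTriviallyAt x (A ^ N) :=
  fun u v => (hA u v).pow_left N

lemma ActsTriviallyAt.sum {ι : Type*} {s : Finset ι} {F : ι → Matrix (∀ y, Q y) (∀ y, Q y) ℂ}
    (hF : ∀ i ∈ s, ActsTriviallyAt x (F i)) : ActsTriviallyAt x (∑ i ∈ s, F i) :=
  fun u v => Commute.sum_left _ _ _ fun i hi => hF i hi u v

lemma TracelessAt.sum {ι : Type*} {s : Finset ι} {F : ι → Matrix (∀ y, Q y) (∀ y, Q y) ℂ}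
    (hF : ∀ i ∈ s, TracelessAt Q x (F i)) : TracelessAt Q x (∑ i ∈ s, F i) := by
  intro f g
  simp only [Matrix.sum_apply]
  rw [Finset.sum_comm]
  exact Finset.sum_eq_zero fun i hi => hF i hi f g

lemma SupportedOn.actsTriviallyAt {S : Finset (Fin m)} (hA : SupportedOn Q S A) (hx : x ∉ S) :
    ActsTriviallyAt x A := by
  obtain ⟨B, rfl⟩ := hA
  intro u v
  ext f g
  have hin (f : ∀ y, Q y) (w : Q x) :
      (fun y : {y // y ∈ S} => Function.update f x w y) = fun y : {y // y ∈ S} => f y :=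
    Function.update_comp_eq_of_forall_ne' f w fun y h => hx (h ▸ y.2)
  have hout (f : ∀ y, Q y) (w : Q x) : (fun y : {y // y ∉ S} => Function.update f x w y) =
      Function.update (fun y : {y // y ∉ S} => f y) ⟨x, hx⟩ w :=
    Function.update_comp_eq_of_injective' f Subtype.val_injective ⟨x, hx⟩ w
  rw [mul_siteUnit_apply, siteUnit_mul_apply]
  simp only [reindex_apply, submatrix_apply, Equiv.symm_symm, kroneckerMap_apply, one_apply,
    Equiv.piEquivPiSubtypeProd_apply, hin, hout, mul_ite, mul_one, mul_zero, ← ite_and]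
  refine if_congr ?_ rfl rfl
  rw [@eq_comm _ (Function.update _ _ _)]
  exact eq_update_and_apply_eq_iff (β := fun y : {y // y ∉ S} => Q y) (i := ⟨x, hx⟩)
    (f := fun y => g y) (g := fun y => f y)

lemma TracelessAt.sum_siteUnit_mul_mul_siteUnit (hA : TracelessAt Q x A) (u : Q x) :
    ∑ v, siteUnit x u v * A * siteUnit x v u = 0 := by
  ext f g
  simp only [Matrix.sum_apply, mul_siteUnit_apply, siteUnit_mul_apply]
  by_cases hg : g x = u <;> by_cases hf : f x = u <;> simp [hg, hf, hA f g]

lemma ActsTriviallyAt.trace_mul_eq_zero (hA : ActsTriviallyAt x A) (hB : TracelessAt Q x B) :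
    trace (A * B) = 0 := by
  rcases isEmpty_or_nonempty (Q x) with hQ | ⟨⟨u⟩⟩
  · have : IsEmpty (∀ y, Q y) := ⟨fun f => hQ.elim (f x)⟩
    simp [trace]
  have hcycle (v : Q x) :
      trace (A * (siteUnit x v v * B)) = trace (A * (siteUnit x u v * B * siteUnit x v u)) := by
    calc trace (A * (siteUnit x v v * B))
        = trace (A * siteUnit x v u * (siteUnit x u v * B)) := by
          simp only [← siteUnit_mul_siteUnit v u v, mul_assoc]
      _ = trace (siteUnit x v u * (A * (siteUnit x u v * B))) := by rw [(hA v u).eq, mul_assoc]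
      _ = trace (A * (siteUnit x u v * B * siteUnit x v u)) := by
          rw [trace_mul_comm]
          simp only [mul_assoc]
  calc trace (A * B) = ∑ v, trace (A * (siteUnit x v v * B)) := by
        rw [← trace_sum, ← Finset.mul_sum, ← Finset.sum_mul, sum_siteUnit_self, one_mul]
    _ = trace (A * ∑ v, siteUnit x u v * B * siteUnit x v u) := by
        simp only [hcycle, Finset.mul_sum, trace_sum]
    _ = 0 := by rw [hB.sum_siteUnit_mul_mul_siteUnit, mul_zero, Matrix.trace_zero]

lemma ActsTriviallyAt.schattenNorm_add_sq_le {N : ℕ} (hN : N ≠ 0) (hA : ActsTriviallyAt x A)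
    (hB : TracelessAt Q x B) :
    schattenNorm (2 * N : ℕ) (A + B) ^ 2 ≤
      schattenNorm (2 * N : ℕ) A ^ 2 + (2 * N - 1) * schattenNorm (2 * N : ℕ) B ^ 2 :=
  _root_.schattenNorm_add_sq_le hN
    (((hA.conjTranspose.mul hA).pow _).mul hA.conjTranspose |>.trace_mul_eq_zero hB)

theorem schattenNorm_sum_powerset_sq_le {N : ℕ} (hN : N ≠ 0) (T : Finset (Fin m))
    (H : Finset (Fin m) → Matrix (∀ y, Q y) (∀ y, Q y) ℂ)
    (htr : ∀ S ⊆ T, ∀ x ∈ S, TracelessAt Q x (H S))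
    (htriv : ∀ S ⊆ T, ∀ x ∈ T, x ∉ S → ActsTriviallyAt x (H S)) :
    schattenNorm (2 * N : ℕ) (∑ S ∈ T.powerset, H S) ^ 2 ≤
      ∑ S ∈ T.powerset, (2 * N - 1 : ℝ) ^ S.card * schattenNorm (2 * N : ℕ) (H S) ^ 2 := by
  have hN1 : (0 : ℝ) ≤ 2 * N - 1 := by
    have : (1 : ℝ) ≤ N := by exact_mod_cast Nat.one_le_iff_ne_zero.mpr hN
    linarith
  induction T using Finset.induction_on generalizing H with
  | empty => simp
  | insert x T hx ih =>
    have hout {S : Finset (Fin m)} (hS : S ∈ T.powerset) : x ∉ S :=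
      fun h => hx (Finset.mem_powerset.mp hS h)
    have hsub {S : Finset (Fin m)} (hS : S ⊆ T) : S ⊆ insert x T :=
      hS.trans (Finset.subset_insert x T)
    have hins {S : Finset (Fin m)} (hS : S ⊆ T) : insert x S ⊆ insert x T :=
      Finset.insert_subset_insert x hS
    have hX : ActsTriviallyAt x (∑ S ∈ T.powerset, H S) := .sum fun S hS =>
      htriv S (hsub (Finset.mem_powerset.mp hS)) x (Finset.mem_insert_self x T) (hout hS)
    have hY : TracelessAt Q x (∑ S ∈ T.powerset, H (insert x S)) := .sum fun S hS =>
      htr _ (hins (Finset.mem_powerset.mp hS)) x (Finset.mem_insert_self x S)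
    have hwithout := ih H (fun S hS => htr S (hsub hS))
      fun S hS y hy => htriv S (hsub hS) y (Finset.mem_insert_of_mem hy)
    have hwith := ih (fun S => H (insert x S))
      (fun S hS y hy => htr _ (hins hS) y (Finset.mem_insert_of_mem hy))
      fun S hS y hy hyS => htriv _ (hins hS) y (Finset.mem_insert_of_mem hy) fun h =>
        (Finset.mem_insert.mp h).elim (fun h => hx (h ▸ hy)) hyS
    rw [Finset.sum_powerset_insert hx, Finset.sum_powerset_insert hx]
    refine (hX.schattenNorm_add_sq_le hN hY).trans (add_le_add hwithout ?_)
    refine (mul_le_mul_of_nonneg_left hwith hN1).trans_eq ?_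
    rw [Finset.mul_sum]
    exact Finset.sum_congr rfl fun S hS => by
      rw [Finset.card_insert_of_notMem (hout hS), pow_succ' (2 * N - 1 : ℝ), mul_assoc]

theorem schattenNorm_sum_powersetCard_sq_le {N : ℕ} (hN : N ≠ 0) {k : ℕ}
    {H : Finset (Fin m) → Matrix (∀ y, Q y) (∀ y, Q y) ℂ}
    (hsupp : ∀ S ∈ Finset.univ.powersetCard k, SupportedOn Q S (H S))
    (htr : ∀ S ∈ Finset.univ.powersetCard k, ∀ x ∈ S, TracelessAt Q x (H S)) :
    schattenNorm (2 * N : ℕ) (∑ S ∈ Finset.univ.powersetCard k, H S) ^ 2 ≤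
      (2 * N - 1) ^ k *
        ∑ S ∈ Finset.univ.powersetCard k, schattenNorm (2 * N : ℕ) (H S) ^ 2 := by
  have hmem {S : Finset (Fin m)} : S ∈ Finset.univ.powersetCard k ↔ S.card = k := by simp
  have hzero : schattenNorm (2 * N : ℕ) (0 : Matrix (∀ y, Q y) (∀ y, Q y) ℂ) = 0 := by
    simpa using schattenNorm_smul (p := (2 * N : ℕ)) (by positivity) 0 (0 : Matrix (∀ y, Q y) _ ℂ)
  have hsum := schattenNorm_sum_powerset_sq_le hN Finset.univ
    (fun S => if S.card = k then H S else 0)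
    (fun S _ x hx => by
      split_ifs with hS
      exacts [htr S (hmem.mpr hS) x hx, fun f g => by simp])
    (fun S _ x _ hx => by
      split_ifs with hS
      exacts [(hsupp S (hmem.mpr hS)).actsTriviallyAt hx, fun u v => Commute.zero_left _])
  simp only [← Finset.sum_filter, Finset.powerset_univ, Finset.univ_filter_card_eq] at hsum
  refine hsum.trans_eq ?_
  rw [Finset.mul_sum, ← Finset.univ_filter_card_eq, Finset.sum_filter]
  refine Finset.sum_congr rfl fun S _ => ?_
  split_ifs with hS
  · rw [hS]
  · rw [hzero, zero_pow two_ne_zero, mul_zero]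

variable {k : ℕ} {H : Finset (Fin m) → Matrix (∀ x, Q x) (∀ x, Q x) ℂ}

lemma nschattenNorm_even_sum_powersetCard_le {N : ℕ} (hN : N ≠ 0)
    (hsupp : ∀ S ∈ Finset.univ.powersetCard k, SupportedOn Q S (H S))
    (htr : ∀ S ∈ Finset.univ.powersetCard k, ∀ x ∈ S, TracelessAt Q x (H S)) :
    nschattenNorm (2 * N : ℕ) (∑ S ∈ Finset.univ.powersetCard k, H S) ≤
      (2 * N - 1 : ℝ) ^ ((k : ℝ) / 2) * √(∑ S ∈ Finset.univ.powersetCard k, ‖H S‖ ^ 2) := by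
  have hN1 : (0 : ℝ) ≤ 2 * N - 1 := by
    have : (1 : ℝ) ≤ N := by exact_mod_cast Nat.one_le_iff_ne_zero.mpr hN
    linarith
  have hnorm (S : Finset (Fin m)) : nschattenNorm (2 * N : ℕ) (H S) ^ 2 ≤ ‖H S‖ ^ 2 :=
    pow_le_pow_left₀ (nschattenNorm_nonneg _ _) (nschattenNorm_le_norm (by positivity) _) 2
  have hsqrt : (2 * N - 1 : ℝ) ^ ((k : ℝ) / 2) = √((2 * N - 1) ^ k) := by
    rw [Real.sqrt_eq_rpow, ← Real.rpow_natCast_mul hN1, mul_one_div]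
  rw [hsqrt, ← Real.sqrt_mul (pow_nonneg hN1 k)]
  refine Real.le_sqrt_of_sq_le ?_
  calc nschattenNorm (2 * N : ℕ) (∑ S ∈ Finset.univ.powersetCard k, H S) ^ 2
      ≤ (2 * N - 1) ^ k *
          ∑ S ∈ Finset.univ.powersetCard k, nschattenNorm (2 * N : ℕ) (H S) ^ 2 := by
        simp only [nschattenNorm, div_pow, ← Finset.sum_div, ← mul_div_assoc]
        exact div_le_div_of_nonneg_right (schattenNorm_sum_powersetCard_sq_le hN hsupp htr)
          (sq_nonneg _)
    _ ≤ (2 * N - 1) ^ k * ∑ S ∈ Finset.univ.powersetCard k, ‖H S‖ ^ 2 :=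
        mul_le_mul_of_nonneg_left (Finset.sum_le_sum fun S _ => hnorm S) (pow_nonneg hN1 k)

theorem nschattenNorm_sum_powersetCard_le {r : ℝ} (hr : 2 ≤ r)
    (hsupp : ∀ S ∈ Finset.univ.powersetCard k, SupportedOn Q S (H S))
    (htr : ∀ S ∈ Finset.univ.powersetCard k, ∀ x ∈ S, TracelessAt Q x (H S)) :
    nschattenNorm r (∑ S ∈ Finset.univ.powersetCard k, H S) ≤
      r ^ ((k : ℝ) / 2) * √(∑ S ∈ Finset.univ.powersetCard k, ‖H S‖ ^ 2) :=
  nschattenNorm_le_rpow_mul_of_forall_even (by positivity) (Real.sqrt_nonneg _)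
    (fun _ hN => nschattenNorm_even_sum_powersetCard_le hN hsupp htr) hr

end Sites

/-- **Approximate submultiplicativity for normalized Schatten `p`-norms, `k`-local case.**
For a `k`-local Hamiltonian `H = ∑_{i₁<⋯<i_k} H_{i₁⋯i_k}` (sum over `k`-element subsets,
each term supported on its subset and traceless on each of its qudits), every nonzero `O`
with `‖O‖_∞ ≤ 1` and every `p ≥ 2`,
`‖HO‖_p̄ ≤ e·p^{k/2}·‖H‖_(2)·‖O‖_p̄·(|ln ‖O‖_p̄| + 1)^{k/2}`. -/
theorem klocal_nschatten_submultiplicativity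
    {m : ℕ} (Q : Fin m → Type*) [∀ x, Fintype (Q x)] [∀ x, DecidableEq (Q x)]
    (k : ℕ)
    (Hterm : Finset (Fin m) → Matrix (∀ x, Q x) (∀ x, Q x) ℂ)
    (hsupp : ∀ S ∈ Finset.univ.powersetCard k, SupportedOn Q S (Hterm S))
    (htr : ∀ S ∈ Finset.univ.powersetCard k, ∀ x ∈ S, TracelessAt Q x (Hterm S))
    (H : Matrix (∀ x, Q x) (∀ x, Q x) ℂ)
    (hH : H = ∑ S ∈ Finset.univ.powersetCard k, Hterm S)
    (O : Matrix (∀ x, Q x) (∀ x, Q x) ℂ) (hO : O ≠ 0) (hOnorm : opNorm O ≤ 1)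
    (p : ℝ) (hp : 2 ≤ p) :
    nschattenNorm p (H * O) ≤
      Real.exp 1 * p ^ ((k : ℝ) / 2) *
        Real.sqrt (∑ S ∈ Finset.univ.powersetCard k, opNorm (Hterm S) ^ 2) *
        nschattenNorm p O * (|Real.log (nschattenNorm p O)| + 1) ^ ((k : ℝ) / 2) := by
  subst hH
  exact nschattenNorm_mul_le_of_forall_le_rpow_mul (by linarith)
    (fun r hr => nschattenNorm_sum_powersetCard_le (hp.trans hr) hsupp htr) hO hOnorm
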